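/- arXiv:1504.07364 — 2 statements merged into one kernel-verified Lean document; each statement's English description precedes it below -/
import Mathlib

section
/- Define g^1_4(τ) = g_{(1/2,0)}(τ)⁸ / g_{(1/4,0)}(τ)⁸ for τ ∈ ℍ. Then g^1_4 is holomorphic on ℍ and, for c ∈ ℂ, the function g^1_4(τ) − c has no zeros on ℍ if and only if c ∈ {0, 16}; equivalently, the set of values taken by g^1_4 on ℍ is exactly ℂ∖{0, 16}. -/
open Complex UpperHalfPlane Matrix MatrixGroups CongruenceSubgroup
open scoped UpperHalfPlane Manifold Real

noncomputable section

/-- `N·τ` as a point of the upper half-plane (junk value `τ` if `N = 0`). -/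
def hsmul (N : ℕ) (τ : UpperHalfPlane) : UpperHalfPlane :=
  if hN : 0 < N then
    ⟨(N : ℂ) * τ, by
      have h0 : (0 : ℝ) < (N : ℝ) := by exact_mod_cast hN
      simpa [Complex.mul_im] using mul_pos h0 τ.2⟩
  else τ

/-- The Siegel function `g_r(τ)` given by its infinite product expansion. -/
def siegel (r : ℚ × ℚ) (τ : ℍ) : ℂ :=
  -Complex.exp ((Real.pi : ℂ) * Complex.I * (((r.1 : ℂ) ^ 2 - (r.1 : ℂ) + 1 / 6) * τ)) *
    Complex.exp ((Real.pi : ℂ) * Complex.I * (r.2 : ℂ) * ((r.1 : ℂ) - 1)) *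
    (1 - Complex.exp (2 * (Real.pi : ℂ) * Complex.I * ((r.1 : ℂ) * τ + (r.2 : ℂ)))) *
    ∏' n : ℕ,
      ((1 - Complex.exp (2 * (Real.pi : ℂ) * Complex.I *
          (((n : ℂ) + 1 + (r.1 : ℂ)) * τ + (r.2 : ℂ)))) *
       (1 - Complex.exp (2 * (Real.pi : ℂ) * Complex.I *
          (((n : ℂ) + 1 - (r.1 : ℂ)) * τ - (r.2 : ℂ)))))

/-- The lattice point `ω = m·τ + n` attached to a pair `(m,n) ∈ ℤ²`. -/
def lat (τ : ℍ) (p : ℤ × ℤ) : ℂ := (p.1 : ℂ) * τ + (p.2 : ℂ)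

/-- `g₂(τ) = 60 ∑_{ω ∈ L_τ ∖ {0}} ω⁻⁴`. -/
def g2C (τ : ℍ) : ℂ := 60 * ∑' p : {p : ℤ × ℤ // p ≠ 0}, ((lat τ p.1) ^ 4)⁻¹

/-- `g₃(τ) = 140 ∑_{ω ∈ L_τ ∖ {0}} ω⁻⁶`. -/
def g3C (τ : ℍ) : ℂ := 140 * ∑' p : {p : ℤ × ℤ // p ≠ 0}, ((lat τ p.1) ^ 6)⁻¹

/-- The discriminant `Δ(τ) = g₂(τ)³ - 27 g₃(τ)²`. -/
def discC (τ : ℍ) : ℂ := g2C τ ^ 3 - 27 * g3C τ ^ 2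

/-- The Weierstrass `℘`-function relative to the lattice `L_τ = ℤτ + ℤ`. -/
def wpC (z : ℂ) (τ : ℍ) : ℂ :=
  (z ^ 2)⁻¹ + ∑' p : {p : ℤ × ℤ // p ≠ 0}, (((z - lat τ p.1) ^ 2)⁻¹ - ((lat τ p.1) ^ 2)⁻¹)

/-- The Fricke function `f_r(τ)`. -/
def fricke (r : ℚ × ℚ) (τ : ℍ) : ℂ :=
  -(2 ^ 7 * 3 ^ 5) * (g2C τ * g3C τ / discC τ) * wpC ((r.1 : ℂ) * τ + (r.2 : ℂ)) τ

/-- The elliptic modular `j`-invariant. -/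
def jinv (τ : ℍ) : ℂ := 1728 * g2C τ ^ 3 / discC τ

/-- The Dedekind eta function. -/
def etaC (τ : ℍ) : ℂ :=
  (Real.sqrt (2 * Real.pi) : ℂ) * Complex.exp (2 * (Real.pi : ℂ) * Complex.I / 16) *
    Complex.exp (2 * (Real.pi : ℂ) * Complex.I * τ / 24) *
    ∏' n : ℕ, (1 - Complex.exp (2 * (Real.pi : ℂ) * Complex.I * ((n : ℂ) + 1) * τ))

/-- `r ∈ ℚ² ∖ ℤ²`. -/
def NonIntegral (r : ℚ × ℚ) : Prop := ¬ ∃ a b : ℤ, r = ((a : ℚ), (b : ℚ))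

/-- `r ∈ (1/N)ℤ²`. -/
def InDen (N : ℕ) (r : ℚ × ℚ) : Prop := ∃ a b : ℤ, r = ((a : ℚ) / N, (b : ℚ) / N)

/-- Membership in `Γ^1(N)`: `a ≡ d ≡ 1` and `b ≡ 0 (mod N)`. -/
def GammaUpper (N : ℕ) (γ : SL(2, ℤ)) : Prop :=
  ((γ 0 0 : ℤ) : ZMod N) = 1 ∧ ((γ 1 1 : ℤ) : ZMod N) = 1 ∧ ((γ 0 1 : ℤ) : ZMod N) = 0

/-- The transpose action `ᵗγ r = (a r₁ + c r₂, b r₁ + d r₂)` of `γ = [[a,b],[c,d]]`. -/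
def tAct (γ : SL(2, ℤ)) (r : ℚ × ℚ) : ℚ × ℚ :=
  ((γ 0 0 : ℚ) * r.1 + (γ 1 0 : ℚ) * r.2, (γ 0 1 : ℚ) * r.1 + (γ 1 1 : ℚ) * r.2)

/-- The power `q^{n/d} = e^{2πi(n/d)τ}`. -/
def qpow (d : ℕ) (n : ℤ) (τ : ℍ) : ℂ :=
  Complex.exp (2 * (Real.pi : ℂ) * Complex.I * ((n : ℂ) / (d : ℂ)) * τ)

/-- `h` is a weakly holomorphic modular function for `Γ₁(N)` with rational
Fourier coefficients: holomorphic on `ℍ`, `Γ₁(N)`-invariant, with a convergent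
`q`-expansion at `i∞` having rational coefficients, and meromorphic at every cusp. -/
def IsWeaklyHolo1 (N : ℕ) (h : ℍ → ℂ) : Prop :=
  MDifferentiable 𝓘(ℂ) 𝓘(ℂ) h ∧
  (∀ γ ∈ Gamma1 N, ∀ τ : ℍ, h (γ • τ) = h τ) ∧
  (∃ n₀ : ℤ, ∃ c : ℕ → ℚ,
    ∀ τ : ℍ, HasSum (fun n : ℕ => (c n : ℂ) * qpow 1 (n₀ + n) τ) (h τ)) ∧
  (∀ γ : SL(2, ℤ), ∃ n₀ : ℤ, ∃ c : ℕ → ℂ,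
    ∀ τ : ℍ, HasSum (fun n : ℕ => c n * qpow N (n₀ + n) τ) (h (γ • τ)))

/-- `h` is a weakly holomorphic modular function for `Γ^1(N)` with rational
Fourier coefficients (the expansion at `i∞` being in powers of `q^{1/N}`). -/
def IsWeaklyHoloUp (N : ℕ) (h : ℍ → ℂ) : Prop :=
  MDifferentiable 𝓘(ℂ) 𝓘(ℂ) h ∧
  (∀ γ : SL(2, ℤ), GammaUpper N γ → ∀ τ : ℍ, h (γ • τ) = h τ) ∧
  (∃ n₀ : ℤ, ∃ c : ℕ → ℚ,
    ∀ τ : ℍ, HasSum (fun n : ℕ => (c n : ℂ) * qpow N (n₀ + n) τ) (h τ)) ∧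
  (∀ γ : SL(2, ℤ), ∃ n₀ : ℤ, ∃ c : ℕ → ℂ,
    ∀ τ : ℍ, HasSum (fun n : ℕ => c n * qpow N (n₀ + n) τ) (h (γ • τ)))

/-- The Weierstrass-unit generator
`f^1_{m,N} = (f_{(1/N,0)} - f_{(1/m,0)})/(f_{(2/m,0)} - f_{(1/m,0)})`. -/
def fUnit (m N : ℕ) (τ : ℍ) : ℂ :=
  (fricke ((1 : ℚ) / N, 0) τ - fricke ((1 : ℚ) / m, 0) τ) /
    (fricke ((2 : ℚ) / m, 0) τ - fricke ((1 : ℚ) / m, 0) τ)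

/-- `g^1_4 = g_{(1/2,0)}⁸ / g_{(1/4,0)}⁸`. -/
def gUp4 (τ : ℍ) : ℂ := siegel ((1 : ℚ) / 2, 0) τ ^ 8 / siegel ((1 : ℚ) / 4, 0) τ ^ 8


/-!
Substituting the products, `g^1_4(2w) = 16 θ₃⁴(w) / θ₂⁴(w)` in terms of Jacobi's theta constants.
The generators `S` and `T` of `SL(2, ℤ)` act on `(θ₂⁴, θ₄⁴, -θ₃⁴)` by transpositions and a common
factor, so every symmetric form of even degree `n` in the three entries is a modular form of level
one and weight `2n`. The squared sum has weight `4` and vanishes at the cusp, hence is `0`: this is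
Jacobi's identity `θ₂⁴ + θ₄⁴ = θ₃⁴`, and as the theta constants have no zeros on `ℍ` the values `0`
and `16` are omitted. For `m ≠ 0, 1` the six conjugates of `-θ₃⁴ + m θ₂⁴` multiply to a form of
weight `12` that does not vanish at the cusp. Such a form has a zero on `ℍ`, since otherwise its
inverse would be a modular form of negative weight; so `16 m` is attained.
-/
open Filter Topology
open Function.Periodic (qParam)

section EulerProducts

lemma multipliable_one_sub_pow_mul_add {R : Type*} [NormedCommRing R] [NormOneClass R]
    [CompleteSpace R] {x : R} (hx : ‖x‖ < 1) {a : ℕ} (ha : a ≠ 0) (b : ℕ) :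
    Multipliable fun n : ℕ => 1 - x ^ (a * n + b) := by
  have hinj : Function.Injective fun n : ℕ => a * n + b := fun m n h => by
    simpa [ha] using h
  have hsum : Summable fun n : ℕ => ‖-x ^ (a * n + b)‖ := by
    simp only [norm_neg]
    exact (summable_norm_geometric_of_norm_lt_one hx).comp_injective hinj
  simpa only [sub_eq_add_neg] using multipliable_one_add_of_summable hsum

/-- Euler's product `∏ (1 - xⁿ)` over `n ≥ 1`, with the index shifted to start at `0`. -/
def eulerFun (x : ℂ) : ℂ := ∏' n : ℕ, (1 - x ^ (n + 1))

/-- The odd part `∏ (1 - x²ⁿ⁺¹)` of Euler's product. -/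
def oddEulerFun (x : ℂ) : ℂ := ∏' n : ℕ, (1 - x ^ (2 * n + 1))

@[simp]
lemma eulerFun_zero : eulerFun 0 = 1 := by simp [eulerFun]

@[simp]
lemma oddEulerFun_zero : oddEulerFun 0 = 1 := by simp [oddEulerFun]

variable {x : ℂ}

lemma eulerFun_eq_oddEulerFun_mul (hx : ‖x‖ < 1) :
    eulerFun x = oddEulerFun x * eulerFun (x ^ 2) := by
  have heven := multipliable_one_sub_pow_mul_add hx two_ne_zero 1
  have hodd := multipliable_one_sub_pow_mul_add hx two_ne_zero 2
  simpa only [eulerFun, oddEulerFun, ← pow_mul, mul_add, mul_one] using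
    (tprod_even_mul_odd (f := fun n : ℕ => 1 - x ^ (n + 1)) heven hodd).symm

lemma oddEulerFun_eq_mod_four (hx : ‖x‖ < 1) :
    oddEulerFun x = (∏' n : ℕ, (1 - x ^ (4 * n + 1))) * ∏' n : ℕ, (1 - x ^ (4 * n + 3)) := by
  have hexp (k : ℕ) : 2 * (2 * k) + 1 = 4 * k + 1 ∧ 2 * (2 * k + 1) + 1 = 4 * k + 3 := by lia
  have h := tprod_even_mul_odd (f := fun n : ℕ => 1 - x ^ (2 * n + 1))
    (by simpa only [hexp] using multipliable_one_sub_pow_mul_add hx four_ne_zero 1)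
    (by simpa only [hexp] using multipliable_one_sub_pow_mul_add hx four_ne_zero 3)
  simpa only [hexp, oddEulerFun] using h.symm

lemma oddEulerFun_mul_oddEulerFun_neg (hx : ‖x‖ < 1) :
    oddEulerFun x * oddEulerFun (-x) = oddEulerFun (x ^ 2) := by
  have hneg : ‖-x‖ < 1 := by rwa [norm_neg]
  rw [oddEulerFun, oddEulerFun, ← (multipliable_one_sub_pow_mul_add hx two_ne_zero 1).tprod_mul
    (multipliable_one_sub_pow_mul_add hneg two_ne_zero 1)]
  refine tprod_congr fun n => ?_
  rw [(odd_two_mul_add_one n).neg_pow]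
  ring

lemma eulerFun_ne_zero (hx : ‖x‖ < 1) : eulerFun x ≠ 0 := by
  have hfactor (n : ℕ) : 1 + -x ^ (n + 1) ≠ 0 := fun h => by
    have hlt : ‖x ^ (n + 1)‖ < 1 := norm_pow x _ ▸ pow_lt_one₀ (norm_nonneg x) hx n.succ_ne_zero
    simp [← eq_of_sub_eq_zero ((sub_eq_add_neg _ _).trans h)] at hlt
  have hsum : Summable fun n : ℕ => ‖-x ^ (n + 1)‖ := by
    simpa only [norm_neg] using
      (summable_nat_add_iff 1).mpr (summable_norm_geometric_of_norm_lt_one hx)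
  simpa only [eulerFun, sub_eq_add_neg] using tprod_one_add_ne_zero_of_summable hfactor hsum

lemma oddEulerFun_ne_zero (hx : ‖x‖ < 1) : oddEulerFun x ≠ 0 :=
  left_ne_zero_of_mul (eulerFun_eq_oddEulerFun_mul hx ▸ eulerFun_ne_zero hx)

lemma norm_sq_lt_one (hx : ‖x‖ < 1) : ‖x ^ 2‖ < 1 :=
  norm_pow x 2 ▸ pow_lt_one₀ (norm_nonneg x) hx two_ne_zero

lemma differentiableAt_eulerFun (hx : ‖x‖ < 1) : DifferentiableAt ℂ eulerFun x :=
  ModularForm.differentiableOn_tprod_one_sub_pow.differentiableAt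
    (Metric.isOpen_ball.mem_nhds (mem_ball_zero_iff.mpr hx))

lemma differentiableAt_oddEulerFun (hx : ‖x‖ < 1) : DifferentiableAt ℂ oddEulerFun x := by
  have hquot : DifferentiableAt ℂ (fun y => eulerFun y / eulerFun (y ^ 2)) x :=
    (differentiableAt_eulerFun hx).fun_div
      ((differentiableAt_eulerFun (norm_sq_lt_one hx)).fun_comp' x (differentiableAt_pow 2))
      (eulerFun_ne_zero (norm_sq_lt_one hx))
  refine hquot.congr_of_eventuallyEq ?_
  filter_upwards [Metric.isOpen_ball.mem_nhds (mem_ball_zero_iff.mpr hx)] with y hy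
  rw [mem_ball_zero_iff] at hy
  rw [eulerFun_eq_oddEulerFun_mul hy,
    mul_div_cancel_right₀ _ (eulerFun_ne_zero (norm_sq_lt_one hy))]

end EulerProducts

section SiegelFunctions

lemma siegel_natCast_div_zero {k l N : ℕ} (hN : N ≠ 0) (hkl : k + l = N) (τ : ℍ) :
    siegel ((k : ℚ) / N, 0) τ =
      -cexp (π * Complex.I * (((k / N : ℂ) ^ 2 - k / N + 1 / 6) * τ)) *
        (∏' n : ℕ, (1 - qParam N τ ^ (N * n + k))) * ∏' n : ℕ, (1 - qParam N τ ^ (N * n + l)) := by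
  have : NeZero N := ⟨hN⟩
  have hx := UpperHalfPlane.norm_qParam_lt_one N τ
  have hN' : (N : ℂ) ≠ 0 := mod_cast hN
  have hl : (l : ℂ) = N - k := by rw [← hkl]; push_cast; ring
  have hhead : cexp (2 * π * Complex.I * (((k / N : ℚ) : ℂ) * τ + (0 : ℚ))) = qParam N τ ^ k := by
    rw [qParam, ← Complex.exp_nat_mul]
    congr 1; push_cast; ring
  have hplus (n : ℕ) : cexp (2 * π * Complex.I * ((n + 1 + ((k / N : ℚ) : ℂ)) * τ + (0 : ℚ))) =
      qParam N τ ^ (N * (n + 1) + k) := by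
    rw [qParam, ← Complex.exp_nat_mul]
    congr 1; push_cast; field_simp; ring
  have hminus (n : ℕ) : cexp (2 * π * Complex.I * ((n + 1 - ((k / N : ℚ) : ℂ)) * τ - (0 : ℚ))) =
      qParam N τ ^ (N * n + l) := by
    rw [qParam, ← Complex.exp_nat_mul]
    congr 1; push_cast; rw [hl]; field_simp; ring
  have hshift : Multipliable fun n : ℕ => 1 - qParam N τ ^ (N * (n + 1) + k) := by
    simpa only [mul_add, add_assoc] using multipliable_one_sub_pow_mul_add hx hN (N * 1 + k)
  simp only [siegel, hhead, hplus, hminus]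
  rw [hshift.tprod_mul (multipliable_one_sub_pow_mul_add hx hN l),
    tprod_eq_zero_mul' (f := fun n : ℕ => 1 - qParam N τ ^ (N * n + k)) hshift]
  push_cast
  simp only [mul_zero, zero_mul, Complex.exp_zero, mul_one, zero_add, mul_assoc]

lemma siegel_one_half_zero (τ : ℍ) :
    siegel (1 / 2, 0) τ = -cexp (-(π * Complex.I * τ / 12)) * oddEulerFun (qParam 4 τ ^ 2) ^ 2 := by
  have h := siegel_natCast_div_zero (k := 2) (l := 2) four_ne_zero rfl τ
  have hB₂ : (2 / 4 : ℂ) ^ 2 - 2 / 4 + 1 / 6 = -1 / 12 := by norm_num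
  push_cast at h
  rw [hB₂, show (2 / 4 : ℚ) = 1 / 2 by norm_num] at h
  have hodd : oddEulerFun (qParam 4 τ ^ 2) = ∏' n : ℕ, (1 - qParam 4 τ ^ (4 * n + 2)) :=
    tprod_congr fun n => by ring
  rw [h, hodd]
  ring_nf

lemma siegel_one_quarter_zero (τ : ℍ) :
    siegel (1 / 4, 0) τ = -cexp (-(π * Complex.I * τ / 48)) * oddEulerFun (qParam 4 τ) := by
  have hx : ‖qParam 4 τ‖ < 1 := UpperHalfPlane.norm_qParam_lt_one 4 τ
  have h := siegel_natCast_div_zero (k := 1) (l := 3) four_ne_zero rfl τ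
  have hB₂ : (1 / 4 : ℂ) ^ 2 - 1 / 4 + 1 / 6 = -1 / 48 := by norm_num
  push_cast at h
  rw [hB₂] at h
  rw [h, oddEulerFun_eq_mod_four hx]
  ring_nf

end SiegelFunctions

section QParam

lemma qParam_pow_eq_qParam {h k : ℝ} {z w : ℂ} {n : ℕ} (hzw : n * (z / h) = w / k) :
    qParam h z ^ n = qParam k w := by
  rw [qParam, qParam, ← Complex.exp_nat_mul, mul_div_assoc, mul_div_assoc, ← hzw]
  ring_nf

lemma exists_qParam_eq {h : ℝ} (hh : 0 < h) {x : ℂ} (hx : ‖x‖ < 1) (hx₀ : x ≠ 0) :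
    ∃ w : ℍ, qParam h w = x :=
  ⟨⟨Function.Periodic.invQParam h x,
    Function.Periodic.im_invQParam_pos_of_norm_lt_one hh hx hx₀⟩,
    Function.Periodic.qParam_right_inv hh.ne' hx₀⟩

lemma mdifferentiable_comp_qParam {E : Type*} [NormedAddCommGroup E] [NormedSpace ℂ E]
    {f : ℂ → E} (hf : ∀ x, ‖x‖ < 1 → DifferentiableAt ℂ f x) {h : ℝ} (hh : 0 < h) :
    MDifferentiable 𝓘(ℂ) 𝓘(ℂ, E) fun w : ℍ => f (qParam h w) := fun w =>
  ((hf _ (Function.Periodic.norm_qParam_lt_one hh w.im_pos)).comp _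
    Function.Periodic.differentiable_qParam.differentiableAt).mdifferentiableAt.comp w
      (UpperHalfPlane.mdifferentiable_coe w)

end QParam

section ThetaConstants

/-- The fourth power `θ₂⁴` of Jacobi's theta constant, as a function of the nome `x = e^{πiτ}`.
By the triple product `θ₂ = 2x^{1/4} ∏ (1 - x²ⁿ)(1 + x²ⁿ)²`, and
`∏ (1 + x²ⁿ) = (∏ (1 - x⁴ⁿ⁻²))⁻¹` by Euler. -/
def theta₂Fourth (x : ℂ) : ℂ := 16 * x * (eulerFun (x ^ 2) / oddEulerFun (x ^ 2) ^ 2) ^ 4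

/-- The fourth power `θ₃⁴` of Jacobi's theta constant, as a function of the nome, in its triple
product form `θ₃ = ∏ (1 - x²ⁿ)(1 + x²ⁿ⁻¹)²`. -/
def theta₃Fourth (x : ℂ) : ℂ := (eulerFun (x ^ 2) * oddEulerFun (-x) ^ 2) ^ 4

/-- The fourth power `θ₄⁴` of Jacobi's theta constant, as a function of the nome, in its triple
product form `θ₄ = ∏ (1 - x²ⁿ)(1 - x²ⁿ⁻¹)²`. -/
def theta₄Fourth (x : ℂ) : ℂ := (eulerFun (x ^ 2) * oddEulerFun x ^ 2) ^ 4

lemma theta₂Fourth_neg (x : ℂ) : theta₂Fourth (-x) = -theta₂Fourth x := by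
  simp only [theta₂Fourth, neg_sq, mul_neg, neg_mul]

lemma theta₃Fourth_neg (x : ℂ) : theta₃Fourth (-x) = theta₄Fourth x := by
  simp only [theta₃Fourth, theta₄Fourth, neg_sq, neg_neg]

lemma theta₄Fourth_neg (x : ℂ) : theta₄Fourth (-x) = theta₃Fourth x := by
  simp only [theta₃Fourth, theta₄Fourth, neg_sq]

@[simp]
lemma theta₂Fourth_zero : theta₂Fourth 0 = 0 := by simp [theta₂Fourth]

@[simp]
lemma theta₃Fourth_zero : theta₃Fourth 0 = 1 := by simp [theta₃Fourth]

@[simp]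
lemma theta₄Fourth_zero : theta₄Fourth 0 = 1 := by simp [theta₄Fourth]

variable {x : ℂ}

lemma theta₂Fourth_ne_zero (hx : ‖x‖ < 1) (h0 : x ≠ 0) : theta₂Fourth x ≠ 0 :=
  mul_ne_zero (mul_ne_zero (by norm_num) h0) (pow_ne_zero 4
    (div_ne_zero (eulerFun_ne_zero (norm_sq_lt_one hx))
      (pow_ne_zero 2 (oddEulerFun_ne_zero (norm_sq_lt_one hx)))))

lemma theta₄Fourth_ne_zero (hx : ‖x‖ < 1) : theta₄Fourth x ≠ 0 :=
  pow_ne_zero 4 (mul_ne_zero (eulerFun_ne_zero (norm_sq_lt_one hx))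
    (pow_ne_zero 2 (oddEulerFun_ne_zero hx)))

lemma theta₃Fourth_ne_zero (hx : ‖x‖ < 1) : theta₃Fourth x ≠ 0 :=
  theta₄Fourth_neg x ▸ theta₄Fourth_ne_zero ((norm_neg x).trans_lt hx)

lemma theta₂Fourth_mul_theta₃Fourth_mul_theta₄Fourth (hx : ‖x‖ < 1) :
    theta₂Fourth x * theta₃Fourth x * theta₄Fourth x = 16 * x * eulerFun (x ^ 2) ^ 12 := by
  have hodd := oddEulerFun_ne_zero (norm_sq_lt_one hx)
  rw [theta₂Fourth, theta₃Fourth, theta₄Fourth]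
  field_simp
  rw [← oddEulerFun_mul_oddEulerFun_neg hx]
  ring

lemma differentiableAt_theta₂Fourth (hx : ‖x‖ < 1) : DifferentiableAt ℂ theta₂Fourth x := by
  have hφ := (differentiableAt_eulerFun (norm_sq_lt_one hx)).fun_comp' x (differentiableAt_pow 2)
  have hO := (differentiableAt_oddEulerFun (norm_sq_lt_one hx)).fun_comp' x (differentiableAt_pow 2)
  have hO' := oddEulerFun_ne_zero (norm_sq_lt_one hx)
  exact (differentiableAt_id.const_mul 16).fun_mul
    ((hφ.fun_div (hO.fun_pow 2) (pow_ne_zero 2 hO')).fun_pow 4)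

lemma differentiableAt_theta₄Fourth (hx : ‖x‖ < 1) : DifferentiableAt ℂ theta₄Fourth x := by
  have hφ := (differentiableAt_eulerFun (norm_sq_lt_one hx)).fun_comp' x (differentiableAt_pow 2)
  exact (hφ.fun_mul ((differentiableAt_oddEulerFun hx).fun_pow 2)).fun_pow 4

lemma differentiableAt_theta₃Fourth (hx : ‖x‖ < 1) : DifferentiableAt ℂ theta₃Fourth x := by
  have hneg : ‖-x‖ < 1 := (norm_neg x).trans_lt hx
  simpa only [theta₄Fourth_neg] using
    (differentiableAt_theta₄Fourth hneg).fun_comp' x differentiable_neg.differentiableAt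

/-- `gUp4` is `16 / λ`, where `λ = θ₂⁴ / θ₃⁴` is taken at `τ / 2`, whose nome is `qParam 4 τ`. -/
lemma gUp4_eq_theta (τ : ℍ) :
    gUp4 τ = 16 * theta₃Fourth (qParam 4 τ) / theta₂Fourth (qParam 4 τ) := by
  have hx : ‖qParam 4 τ‖ < 1 := UpperHalfPlane.norm_qParam_lt_one 4 τ
  have hexp : cexp (-(π * Complex.I * τ / 12)) ^ 8 =
      cexp (-(π * Complex.I * τ / 48)) ^ 8 * (qParam 4 τ)⁻¹ := by
    rw [qParam, ← Complex.exp_neg, ← Complex.exp_nat_mul, ← Complex.exp_nat_mul, ← Complex.exp_add]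
    push_cast
    ring_nf
  have hexp₀ := Complex.exp_ne_zero (-(π * Complex.I * τ / 48))
  have hx₀ : qParam 4 τ ≠ 0 := Function.Periodic.qParam_ne_zero _
  have hφ := eulerFun_ne_zero (norm_sq_lt_one hx)
  have hO := oddEulerFun_ne_zero hx
  have hO₂ := oddEulerFun_ne_zero (norm_sq_lt_one hx)
  have hneg (u : ℂ) : (-u) ^ 8 = u ^ 8 := (even_two_mul 4).neg_pow u
  rw [gUp4, siegel_one_half_zero, siegel_one_quarter_zero, mul_pow, mul_pow, hneg, hneg, hexp,
    theta₂Fourth, theta₃Fourth]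
  field_simp
  rw [← oddEulerFun_mul_oddEulerFun_neg hx]
  ring

end ThetaConstants

section ThetaInversion

lemma eta_neg_inv_pow_four {z : ℂ} (hz : 0 < z.im) :
    ModularForm.eta (-1 / z) ^ 4 = -z ^ 2 * ModularForm.eta z ^ 4 := by
  have sq_sqrt {u : ℂ} (hu : u ≠ 0) : Complex.sqrt u ^ 2 = u := by
    rw [_root_.sqrt_eq_exp hu, ← Complex.exp_nat_mul, Nat.cast_ofNat,
      mul_div_cancel₀ _ two_ne_zero, Complex.exp_log hu]
  have hz₀ : z ≠ 0 := by rintro rfl; exact lt_irrefl _ hz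
  have h := ModularForm.eta_comp_eq_csqrt_I_inv hz
  simp only [Function.comp_apply, Pi.smul_apply, Pi.mul_apply, smul_eq_mul] at h
  calc ModularForm.eta (-1 / z) ^ 4
      = ((Complex.sqrt Complex.I ^ 2) ^ 2)⁻¹ *
          ((Complex.sqrt z ^ 2) ^ 2 * ModularForm.eta z ^ 4) := by rw [h]; ring
    _ = -z ^ 2 * ModularForm.eta z ^ 4 := by
      rw [sq_sqrt hz₀, sq_sqrt Complex.I_ne_zero, Complex.I_sq]; ring

lemma qParam_twentyFour_pow_twelve (z : ℂ) : qParam 24 z ^ 12 = qParam 2 z :=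
  qParam_pow_eq_qParam (by push_cast; ring)

lemma eta_eq_qParam_mul_eulerFun (z : ℂ) :
    ModularForm.eta z = qParam 24 z * eulerFun (qParam 2 z ^ 2) := by
  rw [qParam_pow_eq_qParam (k := 1) (w := z) (by push_cast; ring)]
  rfl

lemma eta_two_mul (z : ℂ) :
    ModularForm.eta (2 * z) = qParam 24 z ^ 2 * eulerFun ((qParam 2 z ^ 2) ^ 2) := by
  rw [eta_eq_qParam_mul_eulerFun, qParam_pow_eq_qParam (z := z) (k := 24) (w := 2 * z),
    qParam_pow_eq_qParam (z := z) (k := 2) (w := 2 * z)] <;>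
  · push_cast
    ring

lemma eta_div_two_sq (z : ℂ) :
    ModularForm.eta (z / 2) ^ 2 = qParam 24 z * eulerFun (qParam 2 z) ^ 2 := by
  rw [eta_eq_qParam_mul_eulerFun, mul_pow, qParam_pow_eq_qParam (k := 24) (w := z),
    qParam_pow_eq_qParam (k := 2) (w := z)] <;>
  · push_cast
    ring

lemma theta₂Fourth_qParam_eq_eta (w : ℍ) :
    theta₂Fourth (qParam 2 w) = 16 * ModularForm.eta (2 * w) ^ 8 / ModularForm.eta w ^ 4 := by
  have hx : ‖qParam 2 w‖ < 1 := UpperHalfPlane.norm_qParam_lt_one 2 w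
  have hq : qParam 24 w ≠ 0 := Function.Periodic.qParam_ne_zero _
  have hO := oddEulerFun_ne_zero (norm_sq_lt_one hx)
  rw [eta_two_mul, eta_eq_qParam_mul_eulerFun, theta₂Fourth,
    eulerFun_eq_oddEulerFun_mul (norm_sq_lt_one hx)]
  nth_rw 1 [← qParam_twentyFour_pow_twelve]
  field_simp

lemma theta₄Fourth_qParam_eq_eta (w : ℍ) :
    theta₄Fourth (qParam 2 w) = ModularForm.eta (w / 2) ^ 8 / ModularForm.eta w ^ 4 := by
  have hx : ‖qParam 2 w‖ < 1 := UpperHalfPlane.norm_qParam_lt_one 2 w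
  have hq : qParam 24 w ≠ 0 := Function.Periodic.qParam_ne_zero _
  rw [show 8 = 2 * 4 by norm_num, pow_mul, eta_div_two_sq, eta_eq_qParam_mul_eulerFun,
    theta₄Fourth, eulerFun_eq_oddEulerFun_mul hx]
  field_simp

lemma theta_mul_qParam_eq_eta (w : ℍ) :
    theta₂Fourth (qParam 2 w) * theta₃Fourth (qParam 2 w) * theta₄Fourth (qParam 2 w) =
      16 * ModularForm.eta w ^ 12 := by
  have hx : ‖qParam 2 w‖ < 1 := UpperHalfPlane.norm_qParam_lt_one 2 w
  rw [theta₂Fourth_mul_theta₃Fourth_mul_theta₄Fourth hx, eta_eq_qParam_mul_eulerFun, mul_pow,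
    qParam_twentyFour_pow_twelve, mul_assoc]

lemma coe_modularS_smul (w : ℍ) : ((ModularGroup.S • w : ℍ) : ℂ) = -1 / w := by
  rw [UpperHalfPlane.modular_S_smul, UpperHalfPlane.coe_mk, inv_neg, neg_div, one_div]

lemma theta₂Fourth_S_smul (w : ℍ) :
    theta₂Fourth (qParam 2 (ModularGroup.S • w : ℍ)) = -w ^ 2 * theta₄Fourth (qParam 2 w) := by
  have hw := w.ne_zero
  have hη := ModularForm.eta_ne_zero w.2
  have him : 0 < ((w : ℂ) / 2).im := by simpa using w.2
  rw [theta₂Fourth_qParam_eq_eta, theta₄Fourth_qParam_eq_eta, coe_modularS_smul,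
    eta_neg_inv_pow_four w.2, show (2 : ℂ) * (-1 / w) = -1 / (w / 2) by field_simp,
    show 8 = 4 * 2 by norm_num, pow_mul, eta_neg_inv_pow_four him]
  field_simp
  ring

lemma theta₄Fourth_S_smul (w : ℍ) :
    theta₄Fourth (qParam 2 (ModularGroup.S • w : ℍ)) = -w ^ 2 * theta₂Fourth (qParam 2 w) := by
  have hw := w.ne_zero
  have h := theta₂Fourth_S_smul (ModularGroup.S • w)
  have hSS : ModularGroup.S • ModularGroup.S • w = w := by
    ext
    rw [coe_modularS_smul, coe_modularS_smul]
    field_simp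
  rw [hSS, coe_modularS_smul] at h
  rw [h, coe_modularS_smul]
  field_simp

lemma theta₃Fourth_S_smul (w : ℍ) :
    theta₃Fourth (qParam 2 (ModularGroup.S • w : ℍ)) = -w ^ 2 * theta₃Fourth (qParam 2 w) := by
  have hx : ‖qParam 2 w‖ < 1 := UpperHalfPlane.norm_qParam_lt_one 2 w
  have hw := w.ne_zero
  have hη : ModularForm.eta (ModularGroup.S • w : ℍ) ^ 12 = -w ^ 6 * ModularForm.eta w ^ 12 := by
    rw [coe_modularS_smul, show 12 = 4 * 3 by norm_num, pow_mul, eta_neg_inv_pow_four w.2]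
    ring
  have h := theta_mul_qParam_eq_eta (ModularGroup.S • w)
  rw [theta₂Fourth_S_smul, theta₄Fourth_S_smul, hη] at h
  have h₂ := theta₂Fourth_ne_zero hx (Function.Periodic.qParam_ne_zero _)
  have h₄ := theta₄Fourth_ne_zero hx
  have h₀ : theta₂Fourth (qParam 2 w) * theta₄Fourth (qParam 2 w) * w ^ 4 ≠ 0 := by positivity
  refine mul_right_cancel₀ h₀ ?_
  linear_combination h + w ^ 6 * theta_mul_qParam_eq_eta w

lemma qParam_two_T_smul (w : ℍ) : qParam 2 (ModularGroup.T • w : ℍ) = -qParam 2 w := by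
  have hexp : 2 * π * Complex.I * (1 + w) / (2 : ℝ) =
      π * Complex.I + 2 * π * Complex.I * w / (2 : ℝ) := by push_cast; ring
  rw [UpperHalfPlane.modular_T_smul, UpperHalfPlane.coe_vadd, qParam, qParam, Complex.ofReal_one,
    hexp, Complex.exp_add, Complex.exp_pi_mul_I, neg_one_mul]

end ThetaInversion

section LevelOneForms

open scoped ModularForm

/-- `f` is a modular form of weight `k` for `SL(2, ℤ)` whose value at the cusp `i∞` is `l`; it is
enough to ask for the transformation laws under the two generators `S` and `T`. -/
structure IsLevelOneForm (k : ℤ) (l : ℂ) (f : ℍ → ℂ) : Prop where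
  mdifferentiable : MDifferentiable 𝓘(ℂ) 𝓘(ℂ) f
  apply_S_smul (w : ℍ) : f (ModularGroup.S • w) = (w : ℂ) ^ k * f w
  apply_T_smul (w : ℍ) : f (ModularGroup.T • w) = f w
  tendsto : Tendsto f atImInfty (𝓝 l)

namespace IsLevelOneForm

variable {k : ℤ} {l : ℂ} {f : ℍ → ℂ}

lemma slash_eq_self (hf : IsLevelOneForm k l f) (γ : SL(2, ℤ)) : f ∣[k] γ = f := by
  refine SlashInvariantForm.slash_action_generators_SL2Z ?_ ?_ γ
  · ext w
    rw [ModularForm.SL_slash_apply, ModularGroup.denom_S, hf.apply_S_smul, mul_right_comm,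
      ← zpow_add₀ w.ne_zero, add_neg_cancel, zpow_zero, one_mul]
  · ext w
    rw [ModularForm.SL_slash_apply, hf.apply_T_smul, ModularGroup.denom_apply]
    simp [ModularGroup.T]

/-- The bundled modular form. -/
def toModularForm (hf : IsLevelOneForm k l f) : ModularForm 𝒮ℒ k where
  toFun := f
  slash_action_eq' := by
    rintro _ ⟨γ, rfl⟩
    exact hf.slash_eq_self γ
  holo' := hf.mdifferentiable
  bdd_at_cusps' hc := by
    rw [Subgroup.IsArithmetic.isCusp_iff_isCusp_SL2Z] at hc
    rw [OnePoint.isBoundedAt_iff_forall_SL2Z hc]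
    intro γ _
    rw [hf.slash_eq_self]
    exact hf.tendsto.isBigO_one ℝ

/-- The bundled cusp form, when the value at the cusp is `0`. -/
def toCuspForm (hf : IsLevelOneForm k 0 f) : CuspForm 𝒮ℒ k where
  __ := hf.toModularForm
  zero_at_cusps' hc := by
    rw [Subgroup.IsArithmetic.isCusp_iff_isCusp_SL2Z] at hc
    rw [OnePoint.isZeroAt_iff_forall_SL2Z hc]
    intro γ _
    change UpperHalfPlane.IsZeroAtImInfty (f ∣[k] γ)
    rw [hf.slash_eq_self]
    exact hf.tendsto

lemma eq_zero_of_weight_lt_twelve (hf : IsLevelOneForm k 0 f) (hk : k < 12) : f = 0 :=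
  congrArg DFunLike.coe
    (rank_zero_iff_forall_zero.mp (CuspForm.rank_eq_zero_of_weight_lt_twelve hk) hf.toCuspForm)

lemma inv (hf : IsLevelOneForm k l f) (hl : l ≠ 0) (hf₀ : ∀ w, f w ≠ 0) :
    IsLevelOneForm (-k) l⁻¹ f⁻¹ where
  mdifferentiable := hf.mdifferentiable.inv hf₀
  apply_S_smul w := by
    rw [Pi.inv_apply, Pi.inv_apply, hf.apply_S_smul, mul_inv, _root_.zpow_neg]
  apply_T_smul w := by rw [Pi.inv_apply, Pi.inv_apply, hf.apply_T_smul]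
  tendsto := hf.tendsto.inv₀ hl

lemma exists_eq_zero_of_weight_pos (hf : IsLevelOneForm k l f) (hk : 0 < k) (hl : l ≠ 0) :
    ∃ w, f w = 0 := by
  by_contra! hf₀
  have hinv : f⁻¹ = 0 := ModularFormClass.levelOne_neg_weight_eq_zero (neg_neg_of_pos hk)
    (hf.inv hl hf₀).toModularForm
  exact inv_ne_zero (hf₀ UpperHalfPlane.I) (congrFun hinv UpperHalfPlane.I)

end IsLevelOneForm

end LevelOneForms

section ThetaTriple

/-- The triple `(θ₂⁴, θ₄⁴, -θ₃⁴)` as a function of the nome. The sign on `θ₃⁴` is the one for which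
`SL(2, ℤ)` permutes the three entries up to a common factor. -/
def thetaTriple (x : ℂ) : Fin 3 → ℂ := ![theta₂Fourth x, theta₄Fourth x, -theta₃Fourth x]

lemma thetaTriple_zero : thetaTriple 0 = ![0, 1, -1] := by simp [thetaTriple]

lemma differentiableAt_thetaTriple {x : ℂ} (hx : ‖x‖ < 1) : DifferentiableAt ℂ thetaTriple x := by
  refine differentiableAt_pi.mpr fun i => ?_
  fin_cases i
  · exact differentiableAt_theta₂Fourth hx
  · exact differentiableAt_theta₄Fourth hx
  · exact (differentiableAt_theta₃Fourth hx).fun_neg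

lemma thetaTriple_S_smul (w : ℍ) :
    thetaTriple (qParam 2 (ModularGroup.S • w : ℍ)) =
      (-w ^ 2 : ℂ) • (thetaTriple (qParam 2 w) ∘ Equiv.swap 0 1) := by
  ext i
  fin_cases i
  · exact theta₂Fourth_S_smul w
  · exact theta₄Fourth_S_smul w
  · exact (congrArg Neg.neg (theta₃Fourth_S_smul w)).trans (mul_neg _ _).symm

lemma thetaTriple_T_smul (w : ℍ) :
    thetaTriple (qParam 2 (ModularGroup.T • w : ℍ)) =
      (-1 : ℂ) • (thetaTriple (qParam 2 w) ∘ Equiv.swap 1 2) := by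
  ext i
  rw [qParam_two_T_smul]
  fin_cases i
  · exact (theta₂Fourth_neg _).trans (neg_one_mul _).symm
  · exact (theta₄Fourth_neg _).trans (by simp [thetaTriple])
  · exact (congrArg Neg.neg (theta₃Fourth_neg _)).trans (neg_one_mul _).symm

lemma exists_thetaTriple_eq_smul_comp (σ : Equiv.Perm (Fin 3)) (w : ℍ) :
    ∃ w' : ℍ, ∃ c : ℂ, thetaTriple (qParam 2 w') = c • (thetaTriple (qParam 2 w) ∘ σ) := by
  have hσ : σ ∈ Submonoid.closure
      (Set.range fun i : Fin 2 => Equiv.swap i.castSucc i.succ) :=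
    Equiv.Perm.mclosure_swap_castSucc_succ 2 ▸ Submonoid.mem_top σ
  induction hσ using Submonoid.closure_induction_right generalizing w with
  | one => exact ⟨w, 1, (one_smul _ _).symm⟩
  | mul_right σ _ s hs ih =>
    obtain ⟨w', c, h⟩ := ih w
    obtain ⟨i, rfl⟩ := hs
    fin_cases i
    · refine ⟨ModularGroup.S • w', -w' ^ 2 * c, ?_⟩
      rw [thetaTriple_S_smul, h, mul_smul]
      rfl
    · refine ⟨ModularGroup.T • w', -1 * c, ?_⟩
      rw [thetaTriple_T_smul, h, mul_smul]
      rfl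

lemma isLevelOneForm_comp_thetaTriple {F : (Fin 3 → ℂ) → ℂ} {n : ℕ} (hF : Differentiable ℂ F)
    (hn : Even n) (hhom : ∀ (c : ℂ) v, F (c • v) = c ^ n * F v)
    (hsymm : ∀ (σ : Equiv.Perm (Fin 3)) v, F (v ∘ σ) = F v) :
    IsLevelOneForm (2 * n) (F ![0, 1, -1]) fun w => F (thetaTriple (qParam 2 w)) where
  mdifferentiable := mdifferentiable_comp_qParam
    (fun _ hx => hF.differentiableAt.fun_comp' _ (differentiableAt_thetaTriple hx)) two_pos
  apply_S_smul w := by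
    rw [thetaTriple_S_smul, hhom, hsymm, hn.neg_pow, ← pow_mul]
    norm_cast
  apply_T_smul w := by
    rw [thetaTriple_T_smul, hhom, hsymm, hn.neg_one_pow, one_mul]
  tendsto := by
    have hcont : ContinuousAt (F ∘ thetaTriple) 0 :=
      hF.continuous.continuousAt.comp (differentiableAt_thetaTriple (by simp)).continuousAt
    rw [← thetaTriple_zero]
    exact hcont.tendsto.comp (UpperHalfPlane.qParam_tendsto_atImInfty two_pos)

lemma theta₂Fourth_add_theta₄Fourth {x : ℂ} (hx : ‖x‖ < 1) :
    theta₂Fourth x + theta₄Fourth x = theta₃Fourth x := by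
  obtain rfl | hx₀ := eq_or_ne x 0
  · simp
  obtain ⟨w, rfl⟩ := exists_qParam_eq two_pos hx hx₀
  have h := isLevelOneForm_comp_thetaTriple (F := fun v => (∑ i, v i) ^ 2) (n := 2)
    (by fun_prop) even_two
    (fun c v => by simp only [Pi.smul_apply, smul_eq_mul, ← Finset.mul_sum, mul_pow])
    (fun σ v => congrArg (· ^ 2) (Equiv.sum_comp σ v))
  have hl : (∑ i, (![0, 1, -1] : Fin 3 → ℂ) i) ^ 2 = 0 := by simp [Fin.sum_univ_three]
  rw [hl] at h
  have hsum : ∑ i, thetaTriple (qParam 2 w) i = 0 :=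
    pow_eq_zero_iff two_ne_zero |>.mp (congrFun (h.eq_zero_of_weight_lt_twelve (by norm_num)) w)
  rw [Fin.sum_univ_three] at hsum
  exact eq_of_sub_eq_zero hsum

lemma exists_theta₃Fourth_eq_mul_theta₂Fourth {m : ℂ} (h₀ : m ≠ 0) (h₁ : m ≠ 1) :
    ∃ x : ℂ, ‖x‖ < 1 ∧ x ≠ 0 ∧ theta₃Fourth x = m * theta₂Fourth x := by
  have h := isLevelOneForm_comp_thetaTriple (n := 6)
    (F := fun v => ∏ σ : Equiv.Perm (Fin 3), (v (σ 2) + m * v (σ 0)))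
    (by fun_prop) (by decide)
    (fun c v => by
      simp only [Pi.smul_apply, smul_eq_mul, mul_left_comm m c, ← mul_add, Finset.prod_mul_distrib]
      simp [Fintype.card_perm, Nat.factorial])
    (fun ρ v => Equiv.prod_comp (Equiv.mulLeft ρ) fun σ => v (σ 2) + m * v (σ 0))
  have hl (i j : Fin 3) (hij : i ≠ j) :
      (![0, 1, -1] : Fin 3 → ℂ) i + m * (![0, 1, -1] : Fin 3 → ℂ) j ≠ 0 := by
    have hm : 1 - m ≠ 0 := sub_ne_zero.mpr h₁.symm
    have hm' : -1 + m ≠ 0 := by rwa [neg_add_eq_sub, sub_ne_zero]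
    fin_cases i <;> fin_cases j <;> simp_all [sub_eq_add_neg]
  obtain ⟨w, hw⟩ := h.exists_eq_zero_of_weight_pos (by norm_num)
    (Finset.prod_ne_zero_iff.mpr fun σ _ => hl _ _ (σ.injective.ne (by decide)))
  obtain ⟨σ, -, hσ⟩ := Finset.prod_eq_zero_iff.mp hw
  obtain ⟨w', c, hw'⟩ := exists_thetaTriple_eq_smul_comp σ w
  have h₂ : theta₂Fourth (qParam 2 w') = c * thetaTriple (qParam 2 w) (σ 0) := congrFun hw' 0
  have h₃ : -theta₃Fourth (qParam 2 w') = c * thetaTriple (qParam 2 w) (σ 2) := congrFun hw' 2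
  refine ⟨qParam 2 w', UpperHalfPlane.norm_qParam_lt_one 2 w',
    Function.Periodic.qParam_ne_zero _, ?_⟩
  linear_combination -h₃ - m * h₂ - c * hσ

end ThetaTriple

section RangeGUp4

lemma mdifferentiable_gUp4 : MDifferentiable 𝓘(ℂ) 𝓘(ℂ) gUp4 := by
  rw [funext gUp4_eq_theta]
  have h₂ (τ : ℍ) : theta₂Fourth (qParam 4 τ) ≠ 0 :=
    theta₂Fourth_ne_zero (UpperHalfPlane.norm_qParam_lt_one 4 τ)
      (Function.Periodic.qParam_ne_zero _)
  exact (mdifferentiable_comp_qParam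
    (fun _ hx => (differentiableAt_theta₃Fourth hx).const_mul 16) four_pos).div
      (mdifferentiable_comp_qParam (fun _ hx => differentiableAt_theta₂Fourth hx) four_pos) h₂

lemma gUp4_ne_zero (τ : ℍ) : gUp4 τ ≠ 0 := by
  have hx : ‖qParam 4 τ‖ < 1 := UpperHalfPlane.norm_qParam_lt_one 4 τ
  rw [gUp4_eq_theta]
  exact div_ne_zero (mul_ne_zero (by norm_num) (theta₃Fourth_ne_zero hx))
    (theta₂Fourth_ne_zero hx (Function.Periodic.qParam_ne_zero _))

lemma gUp4_ne_sixteen (τ : ℍ) : gUp4 τ ≠ 16 := by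
  have hx : ‖qParam 4 τ‖ < 1 := UpperHalfPlane.norm_qParam_lt_one 4 τ
  have h₂ := theta₂Fourth_ne_zero hx (Function.Periodic.qParam_ne_zero _)
  rw [gUp4_eq_theta, Ne, div_eq_iff h₂, mul_right_inj' (by norm_num),
    ← theta₂Fourth_add_theta₄Fourth hx, add_eq_left]
  exact theta₄Fourth_ne_zero hx

lemma exists_gUp4_eq {c : ℂ} (h₀ : c ≠ 0) (h₁₆ : c ≠ 16) : ∃ τ, gUp4 τ = c := by
  obtain ⟨x, hx, hx₀, h⟩ := exists_theta₃Fourth_eq_mul_theta₂Fourth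
    (div_ne_zero h₀ (by norm_num : (16 : ℂ) ≠ 0)) (by rwa [Ne, div_eq_one_iff_eq (by norm_num)])
  obtain ⟨τ, rfl⟩ := exists_qParam_eq four_pos hx hx₀
  refine ⟨τ, ?_⟩
  rw [gUp4_eq_theta, h, ← mul_assoc, mul_div_cancel_right₀ _ (theta₂Fourth_ne_zero hx hx₀)]
  ring

lemma range_gUp4 : Set.range gUp4 = ({0, 16} : Set ℂ)ᶜ := by
  ext c
  rw [Set.mem_compl_iff, Set.mem_insert_iff, Set.mem_singleton_iff, not_or]
  exact ⟨by rintro ⟨τ, rfl⟩; exact ⟨gUp4_ne_zero τ, gUp4_ne_sixteen τ⟩,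
    fun ⟨h₀, h₁₆⟩ => exists_gUp4_eq h₀ h₁₆⟩

end RangeGUp4

/-- `g^1_4` is holomorphic on `ℍ` and `g^1_4 - c` has no zeros on
`ℍ` iff `c ∈ {0, 16}`; equivalently, the range of `g^1_4` is `ℂ ∖ {0, 16}`. -/
theorem statement12 :
    MDifferentiable 𝓘(ℂ) 𝓘(ℂ) gUp4 ∧
    (∀ c : ℂ, (∀ τ : ℍ, gUp4 τ - c ≠ 0) ↔ (c = 0 ∨ c = 16)) ∧
    Set.range gUp4 = ({0, 16} : Set ℂ)ᶜ := by
  refine ⟨mdifferentiable_gUp4, fun c => ?_, range_gUp4⟩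
  have hc : (∃ τ, gUp4 τ = c) ↔ ¬(c = 0 ∨ c = 16) := Set.ext_iff.mp range_gUp4 c
  rw [← not_iff_not, ← hc]
  simp only [ne_eq, sub_eq_zero, not_forall, not_not]
end
end

section
/- Define g^1_6(τ) = g_{(1/2,0)}(τ)³ / g_{(1/6,0)}(τ)³ for τ ∈ ℍ. Then g^1_6 is holomorphic on ℍ and, for c ∈ ℂ, the function g^1_6(τ) − c has no zeros on ℍ if and only if c ∈ {0, 8, −1}; equivalently, the set of values taken by g^1_6 on ℍ is exactly ℂ∖{0, 8, −1}. -/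
open Complex UpperHalfPlane Matrix MatrixGroups CongruenceSubgroup
open scoped UpperHalfPlane Manifold Real

noncomputable section

/-- `g^1_6 = g_{(1/2,0)}³ / g_{(1/6,0)}³`. -/
def gUp6 (τ : ℍ) : ℂ := siegel ((1 : ℚ) / 2, 0) τ ^ 3 / siegel ((1 : ℚ) / 6, 0) τ ^ 3

/-!
Write `kⱼ` for the theta value `thetaWithChar (j / 6) 0 τ`, so that `g^1_6 = (k₃ / k₁)³`.
Weierstrass' three-term identity for theta yields `g^1_6 + 1 = (k₂ / k₁)⁴`, and together with
Jacobi's quartic identity it shows that `k₃ (k₃³ - 8 k₁³)` times a product of theta values at half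
periods is `16 k₁⁸ k₂⁴`. By the product formula no `kⱼ` vanishes, so `0`, `8` and `-1` are omitted.

Conversely, the range is open by the open mapping theorem. The modular group permutes finitely many
conjugates of `g^1_6`, so a point in the closure of the range is the limit of one conjugate along a
sequence in the fundamental domain. It is then a value of `g^1_6` or a limit at a cusp, where the
only limits are `∞`, `0`, `8` and `-1`. Hence the range is open and closed in the connected set
`ℂ ∖ {0, 8, -1}`.
-/

lemma cexp_eq_cexp {a b : ℂ} (n : ℤ) (h : a = b + n * (2 * π * Complex.I)) : cexp a = cexp b :=
  Complex.exp_eq_exp_iff_exists_int.mpr ⟨n, h⟩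

lemma cexp_eq_neg_cexp {a b : ℂ} (n : ℤ) (h : a = b + (2 * n + 1) * (π * Complex.I)) :
    cexp a = -cexp b := by
  rw [cexp_eq_cexp n (b := b + π * Complex.I) (by rw [h]; ring), Complex.exp_add,
    Complex.exp_pi_mul_I, mul_neg_one]

/-! ### The odd theta function -/

/-- The odd Jacobi theta function `θ₁(z, τ)`, up to a constant factor, normalised as
`∑ₙ (-1)ⁿ exp(πi(n - 1/2)²τ + 2πi(n - 1/2)z)`. -/
def oddTheta (z τ : ℂ) : ℂ :=
  cexp (-π * Complex.I * z + π * Complex.I * τ / 4) * jacobiTheta₂ (z + 1 / 2 - τ / 2) τ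

lemma oddTheta_neg (z τ : ℂ) : oddTheta (-z) τ = -oddTheta z τ := by
  have reflect : jacobiTheta₂ (-z + 1 / 2 - τ / 2) τ =
      cexp (-π * Complex.I * (τ + 2 * (z - 1 / 2 - τ / 2))) *
        jacobiTheta₂ (z + 1 / 2 - τ / 2) τ := by
    rw [show z + 1 / 2 - τ / 2 = (z - 1 / 2 - τ / 2) + 1 by ring, jacobiTheta₂_add_left,
      ← jacobiTheta₂_add_left', ← jacobiTheta₂_neg_left]
    congr 1
    ring
  rw [oddTheta, oddTheta, reflect, ← mul_assoc, ← Complex.exp_add, ← neg_mul]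
  congr 1
  exact cexp_eq_neg_cexp 0 (by push_cast; ring)

lemma oddTheta_add_one (z τ : ℂ) : oddTheta (z + 1) τ = -oddTheta z τ := by
  rw [oddTheta, oddTheta, show z + 1 + 1 / 2 - τ / 2 = (z + 1 / 2 - τ / 2) + 1 by ring,
    jacobiTheta₂_add_left, ← neg_mul]
  congr 1
  exact cexp_eq_neg_cexp (-1) (by push_cast; ring)

lemma oddTheta_add_right (z τ : ℂ) :
    oddTheta (z + τ) τ = -cexp (-π * Complex.I * τ - 2 * π * Complex.I * z) * oddTheta z τ := by
  rw [oddTheta, oddTheta, show z + τ + 1 / 2 - τ / 2 = (z + 1 / 2 - τ / 2) + τ by ring,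
    jacobiTheta₂_add_left', ← mul_assoc, ← mul_assoc, ← Complex.exp_add, neg_mul (cexp _),
    ← Complex.exp_add]
  congr 1
  exact cexp_eq_neg_cexp (-1) (by push_cast; ring)

lemma jacobiTheta₂_add_one_right (z τ : ℂ) :
    jacobiTheta₂ z (τ + 1) = jacobiTheta₂ (z + 1 / 2) τ := by
  refine tsum_congr fun n ↦ ?_
  obtain ⟨k, hk⟩ := Int.even_mul_pred_self n
  have hk' : (n : ℂ) * (n - 1) = k + k := mod_cast hk
  exact cexp_eq_cexp k (by linear_combination π * Complex.I * hk')

lemma oddTheta_tau_add_one (z τ : ℂ) :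
    oddTheta z (τ + 1) = cexp (π * Complex.I / 4) * oddTheta z τ := by
  rw [oddTheta, oddTheta, jacobiTheta₂_add_one_right, ← mul_assoc, ← Complex.exp_add]
  congr 2 <;> ring

lemma exists_oddTheta_div_neg_one_div {τ : ℂ} (hτ : 0 < τ.im) : ∃ κ : ℂ, κ ≠ 0 ∧
    ∀ z, oddTheta (z / τ) (-1 / τ) = κ * (cexp (π * Complex.I * z ^ 2 / τ) * oddTheta z τ) := by
  have hτ0 : τ ≠ 0 := by rintro rfl; simp at hτ
  have hroot : (-Complex.I * τ) ^ (1 / 2 : ℂ) ≠ 0 := by simp [Complex.cpow_eq_zero_iff, hτ0]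
  refine ⟨-Complex.I * (-Complex.I * τ) ^ (1 / 2 : ℂ), mul_ne_zero (by simp) hroot, fun z ↦ ?_⟩
  have functional_eq := jacobiTheta₂_functional_equation (z + 1 / 2 - τ / 2 + τ) τ
  rw [jacobiTheta₂_add_left'] at functional_eq
  rw [oddTheta, oddTheta,
    show z / τ + 1 / 2 - -1 / τ / 2 = (z + 1 / 2 - τ / 2 + τ) / τ by field_simp; ring]
  set X := jacobiTheta₂ ((z + 1 / 2 - τ / 2 + τ) / τ) (-1 / τ)
  set Y := jacobiTheta₂ (z + 1 / 2 - τ / 2) τ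
  set c := (-Complex.I * τ) ^ (1 / 2 : ℂ)
  have hX : X = c * (cexp (π * Complex.I * (z + 1 / 2 - τ / 2 + τ) ^ 2 / τ) *
      cexp (-π * Complex.I * (τ + 2 * (z + 1 / 2 - τ / 2))) * Y) := by
    have cancel : cexp (π * Complex.I * (z + 1 / 2 - τ / 2 + τ) ^ 2 / τ) *
        cexp (-π * Complex.I * (z + 1 / 2 - τ / 2 + τ) ^ 2 / τ) = 1 := by
      rw [← Complex.exp_add, ← Complex.exp_zero]
      congr 1
      ring
    rw [mul_assoc (cexp _), functional_eq]
    linear_combination (-X) * mul_one_div_cancel hroot - c * (1 / c) * X * cancel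
  have hexp : cexp (-π * Complex.I * (z / τ) + π * Complex.I * (-1 / τ) / 4) *
      (cexp (π * Complex.I * (z + 1 / 2 - τ / 2 + τ) ^ 2 / τ) *
        cexp (-π * Complex.I * (τ + 2 * (z + 1 / 2 - τ / 2)))) =
      -Complex.I * (cexp (π * Complex.I * z ^ 2 / τ) *
        cexp (-π * Complex.I * z + π * Complex.I * τ / 4)) := by
    rw [← Complex.exp_neg_pi_div_two_mul_I]
    simp only [← Complex.exp_add]
    congr 1
    field_simp
    ring
  rw [hX]
  linear_combination c * Y * hexp

lemma hasSum_of_even_of_odd {α : Type*} [AddCommMonoid α] [TopologicalSpace α] [ContinuousAdd α]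
    {f : ℤ × ℤ → α} {a b : α} (heven : HasSum (fun p : ℤ × ℤ ↦ f (p.1 + p.2, p.1 - p.2)) a)
    (hodd : HasSum (fun p : ℤ × ℤ ↦ f (p.1 + p.2 + 1, p.1 - p.2)) b) : HasSum f (a + b) := by
  let ev : ℤ × ℤ → ℤ × ℤ := fun p ↦ (p.1 + p.2, p.1 - p.2)
  let od : ℤ × ℤ → ℤ × ℤ := fun p ↦ (p.1 + p.2 + 1, p.1 - p.2)
  have ev_injective : ev.Injective := by
    rintro ⟨a, b⟩ ⟨c, d⟩ h
    simp only [ev, Prod.mk.injEq] at h ⊢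
    omega
  have od_injective : od.Injective := by
    rintro ⟨a, b⟩ ⟨c, d⟩ h
    simp only [od, Prod.mk.injEq] at h ⊢
    omega
  have ranges_isCompl : IsCompl (Set.range ev) (Set.range od) := by
    rw [isCompl_iff, Set.disjoint_iff, codisjoint_iff_le_sup]
    constructor
    · rintro _ ⟨⟨⟨a, b⟩, rfl⟩, ⟨⟨c, d⟩, h⟩⟩
      simp only [ev, od, Prod.mk.injEq] at h
      omega
    · rintro ⟨n, m⟩ -
      rcases Int.even_or_odd' (n + m) with ⟨k, hk | hk⟩
      · exact Or.inl ⟨(k, n - k), by simp only [ev, Prod.mk.injEq]; omega⟩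
      · exact Or.inr ⟨(k, n - k - 1), by simp only [od, Prod.mk.injEq]; omega⟩
  exact HasSum.add_isCompl ranges_isCompl (ev_injective.hasSum_range_iff.mpr heven)
    (od_injective.hasSum_range_iff.mpr hodd)

lemma hasSum_jacobiTheta₂_term_mul {τ : ℂ} (hτ : 0 < τ.im) (z w : ℂ) :
    HasSum (fun p : ℤ × ℤ ↦ jacobiTheta₂_term p.1 z τ * jacobiTheta₂_term p.2 w τ)
      (jacobiTheta₂ z τ * jacobiTheta₂ w τ) := by
  have summable_norm (u : ℂ) := ((summable_jacobiTheta₂_term_iff u τ).mpr hτ).norm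
  rw [jacobiTheta₂, jacobiTheta₂,
    tsum_mul_tsum_of_summable_norm (summable_norm z) (summable_norm w)]
  exact (summable_mul_of_summable_norm (summable_norm z) (summable_norm w)).hasSum

lemma jacobiTheta₂_add_mul_jacobiTheta₂_sub {τ : ℂ} (hτ : 0 < τ.im) (x y : ℂ) :
    jacobiTheta₂ (x + y) τ * jacobiTheta₂ (x - y) τ =
      jacobiTheta₂ (2 * x) (2 * τ) * jacobiTheta₂ (2 * y) (2 * τ) +
      cexp (2 * π * Complex.I * x + 2 * π * Complex.I * y + π * Complex.I * τ) *
        (jacobiTheta₂ (2 * x + τ) (2 * τ) * jacobiTheta₂ (2 * y + τ) (2 * τ)) := by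
  have hτ2 : 0 < (2 * τ).im := by simpa using hτ
  refine (hasSum_jacobiTheta₂_term_mul hτ (x + y) (x - y)).unique (hasSum_of_even_of_odd
    ((hasSum_jacobiTheta₂_term_mul hτ2 (2 * x) (2 * y)).congr_fun fun p ↦ ?_)
    (((hasSum_jacobiTheta₂_term_mul hτ2 (2 * x + τ) (2 * y + τ)).mul_left _).congr_fun
      fun p ↦ ?_)) <;>
  · simp only [jacobiTheta₂_term, ← Complex.exp_add]
    congr 1
    push_cast
    ring

lemma oddTheta_add_mul_oddTheta_sub {τ : ℂ} (hτ : 0 < τ.im) (x y : ℂ) :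
    oddTheta (x + y) τ * oddTheta (x - y) τ =
      cexp (2 * π * Complex.I * x + π * Complex.I * τ / 2) *
        jacobiTheta₂ (2 * x + τ) (2 * τ) * jacobiTheta₂ (2 * y) (2 * τ) -
      cexp (2 * π * Complex.I * y + π * Complex.I * τ / 2) *
        jacobiTheta₂ (2 * y + τ) (2 * τ) * jacobiTheta₂ (2 * x) (2 * τ) := by
  have h := jacobiTheta₂_add_mul_jacobiTheta₂_sub hτ (x + 1 / 2 - τ / 2) y
  have shift : jacobiTheta₂ (2 * x + τ) (2 * τ) =
      cexp (-π * Complex.I * (2 * τ + 2 * (2 * x - τ))) * jacobiTheta₂ (2 * x - τ) (2 * τ) := by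
    rw [← jacobiTheta₂_add_left', show 2 * x - τ + 2 * τ = 2 * x + τ by ring]
  rw [show x + 1 / 2 - τ / 2 + y = x + y + 1 / 2 - τ / 2 by ring,
    show x + 1 / 2 - τ / 2 - y = x - y + 1 / 2 - τ / 2 by ring,
    show 2 * (x + 1 / 2 - τ / 2) + τ = 2 * x + 1 by ring,
    show 2 * (x + 1 / 2 - τ / 2) = 2 * x - τ + 1 by ring,
    jacobiTheta₂_add_left, jacobiTheta₂_add_left] at h
  have even_factor : cexp (-π * Complex.I * (x + y) + π * Complex.I * τ / 4) *
        cexp (-π * Complex.I * (x - y) + π * Complex.I * τ / 4) =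
      cexp (2 * π * Complex.I * x + π * Complex.I * τ / 2) *
        cexp (-π * Complex.I * (2 * τ + 2 * (2 * x - τ))) := by
    simp only [← Complex.exp_add]
    congr 1
    ring
  have odd_factor : cexp (-π * Complex.I * (x + y) + π * Complex.I * τ / 4) *
        cexp (-π * Complex.I * (x - y) + π * Complex.I * τ / 4) *
        cexp (2 * π * Complex.I * (x + 1 / 2 - τ / 2) + 2 * π * Complex.I * y + π * Complex.I * τ) =
      -cexp (2 * π * Complex.I * y + π * Complex.I * τ / 2) := by
    simp only [← Complex.exp_add]
    exact cexp_eq_neg_cexp 0 (by push_cast; ring)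
  rw [oddTheta, oddTheta, mul_mul_mul_comm, h, shift]
  linear_combination jacobiTheta₂ (2 * x - τ) (2 * τ) * jacobiTheta₂ (2 * y) (2 * τ) * even_factor +
    jacobiTheta₂ (2 * x) (2 * τ) * jacobiTheta₂ (2 * y + τ) (2 * τ) * odd_factor

lemma oddTheta_three_term {τ : ℂ} (hτ : 0 < τ.im) (x y z w : ℂ) :
    oddTheta (x + y) τ * oddTheta (x - y) τ * (oddTheta (z + w) τ * oddTheta (z - w) τ) +
      oddTheta (y + z) τ * oddTheta (y - z) τ * (oddTheta (x + w) τ * oddTheta (x - w) τ) +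
      oddTheta (z + x) τ * oddTheta (z - x) τ * (oddTheta (y + w) τ * oddTheta (y - w) τ) = 0 := by
  simp only [oddTheta_add_mul_oddTheta_sub hτ]
  ring

/-! ### The triple product, up to a constant factor -/

lemma intervalIntegral_add_eq_of_periodic {h : ℂ → ℂ} (hd : Differentiable ℂ h)
    (hp : Function.Periodic h 1) (w : ℂ) :
    ∫ x in (0 : ℝ)..1, h (x + w) = ∫ x in (0 : ℝ)..1, h x := by
  have rect := Complex.integral_boundary_rect_eq_zero_of_differentiableOn h 0
    (1 + w.im * Complex.I) hd.differentiableOn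
  have vertical_sides (y : ℝ) : h (1 + y * Complex.I) = h (y * Complex.I) := by
    rw [add_comm, hp]
  simp only [Complex.zero_re, Complex.zero_im, Complex.add_re, Complex.add_im, Complex.one_re,
    Complex.one_im, Complex.re_ofReal_mul, Complex.im_ofReal_mul, Complex.I_re, Complex.I_im,
    mul_zero, mul_one, add_zero, zero_add, Complex.ofReal_zero, Complex.ofReal_one, zero_mul,
    vertical_sides, add_sub_cancel_right] at rect
  have line_periodic : Function.Periodic (fun x : ℝ ↦ h (x + w.im * Complex.I)) 1 := fun x ↦ by
    dsimp only
    rw [← hp (x + w.im * Complex.I), Complex.ofReal_add, Complex.ofReal_one, add_right_comm]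
  calc ∫ x in (0 : ℝ)..1, h (x + w)
      = ∫ x in (0 : ℝ)..1, h ((x + w.re : ℝ) + w.im * Complex.I) := by
        simp only [Complex.ofReal_add, add_assoc, Complex.re_add_im]
    _ = ∫ x in w.re..(w.re + 1), h (x + w.im * Complex.I) := by
        rw [intervalIntegral.integral_comp_add_right fun x : ℝ ↦ h (x + w.im * Complex.I),
          zero_add, add_comm 1]
    _ = ∫ x in (0 : ℝ)..1, h (x + w.im * Complex.I) := by
        rw [← line_periodic.intervalIntegral_add_eq 0 w.re, zero_add]
    _ = ∫ x in (0 : ℝ)..1, h x := (sub_eq_zero.mp rect).symm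

lemma eq_zero_of_forall_ofReal_eq_zero {f : ℂ → ℂ} (hd : Differentiable ℂ f)
    (h : ∀ x : ℝ, f x = 0) : f = 0 := by
  have ofReal_tendsto : Filter.Tendsto (fun x : ℝ ↦ (x : ℂ)) (nhdsWithin 0 {0}ᶜ)
      (nhdsWithin 0 {0}ᶜ) :=
    tendsto_nhdsWithin_of_tendsto_nhds_of_eventually_within _
      ((Complex.continuous_ofReal.tendsto' 0 0 Complex.ofReal_zero).mono_left nhdsWithin_le_nhds)
      (by filter_upwards [self_mem_nhdsWithin] with x hx using by simpa using hx)
  exact AnalyticOnNhd.eq_of_frequently_eq (z₀ := 0) (fun z _ ↦ hd.analyticAt z)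
    (fun z _ ↦ analyticAt_const) (ofReal_tendsto.frequently (Filter.Frequently.of_forall h))

lemma eq_zero_of_forall_fourierIntegral_eq_zero {f : ℂ → ℂ} (hd : Differentiable ℂ f)
    (hp : Function.Periodic f 1)
    (h : ∀ n : ℤ, ∫ x in (0 : ℝ)..1, cexp (-2 * π * Complex.I * n * x) * f x = 0) : f = 0 := by
  refine eq_zero_of_forall_ofReal_eq_zero hd fun x ↦ ?_
  have real_periodic : Function.Periodic (fun x : ℝ ↦ f x) 1 := fun x ↦ by
    dsimp only
    rw [← hp x, Complex.ofReal_add, Complex.ofReal_one]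
  let F : C(AddCircle (1 : ℝ), ℂ) := ⟨real_periodic.lift,
    continuous_coinduced_dom.mpr (hd.continuous.comp Complex.continuous_ofReal)⟩
  have coeff_eq_zero : fourierCoeff F = 0 := by
    funext n
    rw [fourierCoeff_eq_intervalIntegral _ n 0, zero_add, div_one, one_smul, Pi.zero_apply,
      ← h n]
    congr 1 with y
    rw [fourier_coe_apply, smul_eq_mul]
    congr 2
    push_cast
    ring
  have hsum := has_pointwise_sum_fourier_series_of_summable (f := F)
    (by rw [coeff_eq_zero]; exact summable_zero) (x : AddCircle (1 : ℝ))
  simp only [coeff_eq_zero, Pi.zero_apply, zero_smul] at hsum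
  exact hsum.unique hasSum_zero

lemma eq_zero_of_quasiPeriodic {τ : ℂ} {f : ℂ → ℂ} (hd : Differentiable ℂ f)
    (hp : Function.Periodic f 1) (hτ : ∀ z, f (z + τ) = -cexp (-2 * π * Complex.I * z) * f z)
    (h : ∫ x in (0 : ℝ)..1, f x = 0) : f = 0 := by
  refine eq_zero_of_forall_fourierIntegral_eq_zero hd hp ?_
  set a : ℤ → ℂ := fun n ↦ ∫ x in (0 : ℝ)..1, cexp (-2 * π * Complex.I * n * x) * f x with ha
  have coeff_succ (n : ℤ) : a (n + 1) = -cexp (2 * π * Complex.I * n * τ) * a n := by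
    have exp_periodic : Function.Periodic (fun z : ℂ ↦ cexp (-2 * π * Complex.I * n * z)) 1 :=
      fun z ↦ cexp_eq_cexp (-n) (by push_cast; ring)
    have shift := intervalIntegral_add_eq_of_periodic
      (h := fun z ↦ cexp (-2 * π * Complex.I * n * z) * f z) (by fun_prop)
      (exp_periodic.mul hp) τ
    simp only [ha]
    rw [← shift, ← intervalIntegral.integral_const_mul]
    congr 1 with x
    have exp_split : cexp (-2 * π * Complex.I * (n + 1 : ℤ) * x) =
        cexp (2 * π * Complex.I * n * τ) *
          (cexp (-2 * π * Complex.I * n * (x + τ)) * cexp (-2 * π * Complex.I * x)) := by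
      rw [← Complex.exp_add, ← Complex.exp_add]
      congr 1
      push_cast
      ring
    rw [hτ, exp_split]
    ring
  change ∀ n, a n = 0
  intro n
  induction n using Int.induction_on with
  | zero => simpa [ha] using h
  | succ n ih => rw [coeff_succ, ih, mul_zero]
  | pred n ih =>
    have := coeff_succ (-n - 1)
    rw [sub_add_cancel, ih, eq_comm, mul_eq_zero] at this
    exact this.resolve_left (neg_ne_zero.mpr (Complex.exp_ne_zero _))

lemma integral_cexp_two_pi_I_int_mul (n : ℤ) :
    ∫ x in (0 : ℝ)..1, cexp (2 * π * Complex.I * n * x) = if n = 0 then 1 else 0 := by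
  split_ifs with hn
  · simp [hn]
  · rw [integral_exp_mul_complex (by simp [hn]), cexp_eq_cexp (b := 0) n (by push_cast; ring)]
    simp

lemma integral_jacobiTheta₂ {τ : ℂ} (hτ : 0 < τ.im) (w : ℂ) :
    ∫ x in (0 : ℝ)..1, jacobiTheta₂ (x + w) τ = 1 := by
  have term_eq (n : ℤ) (x : ℝ) : jacobiTheta₂_term n (x + w) τ =
      jacobiTheta₂_term n w τ * cexp (2 * π * Complex.I * n * x) := by
    rw [jacobiTheta₂_term, jacobiTheta₂_term, ← Complex.exp_add]
    ring_nf
  have summable_norm := ((summable_jacobiTheta₂_term_iff w τ).mpr hτ).norm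
  have hsum : HasSum (fun n : ℤ ↦ ∫ x in (0 : ℝ)..1, jacobiTheta₂_term n (x + w) τ)
      (∫ x in (0 : ℝ)..1, jacobiTheta₂ (x + w) τ) := by
    refine intervalIntegral.hasSum_integral_of_dominated_convergence
      (fun n _ ↦ ‖jacobiTheta₂_term n w τ‖) (fun n ↦ ?_) (fun n ↦ ?_)
      (.of_forall fun _ _ ↦ summable_norm) ?_
      (.of_forall fun x _ ↦ hasSum_jacobiTheta₂_term (x + w) hτ)
    · simp only [term_eq]
      exact Continuous.aestronglyMeasurable (by fun_prop)
    · exact .of_forall fun x _ ↦ by simp [norm_jacobiTheta₂_term]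
    · simp
  refine hsum.unique ?_
  simp only [term_eq, intervalIntegral.integral_const_mul, integral_cexp_two_pi_I_int_mul]
  convert! hasSum_ite_eq (0 : ℤ) (1 : ℂ) using 2 with n
  split_ifs with hn <;> simp [jacobiTheta₂_term, hn]

lemma eq_integral_mul_jacobiTheta₂ {τ : ℂ} (hτ : 0 < τ.im) {g : ℂ → ℂ} (hd : Differentiable ℂ g)
    (hp : Function.Periodic g 1) (hg : ∀ z, g (z + τ) = -cexp (-2 * π * Complex.I * z) * g z)
    (z : ℂ) : g z = (∫ x in (0 : ℝ)..1, g x) * jacobiTheta₂ (z + 1 / 2 - τ / 2) τ := by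
  set c := ∫ x in (0 : ℝ)..1, g x
  have theta_differentiable : Differentiable ℂ fun z ↦ jacobiTheta₂ (z + 1 / 2 - τ / 2) τ :=
    fun z ↦ (differentiableAt_jacobiTheta₂_fst _ hτ).comp z
      (f := fun z ↦ z + 1 / 2 - τ / 2) (by fun_prop)
  have theta_quasiPeriodic (z : ℂ) : jacobiTheta₂ (z + τ + 1 / 2 - τ / 2) τ =
      -cexp (-2 * π * Complex.I * z) * jacobiTheta₂ (z + 1 / 2 - τ / 2) τ := by
    rw [show z + τ + 1 / 2 - τ / 2 = z + 1 / 2 - τ / 2 + τ by ring, jacobiTheta₂_add_left']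
    congr 1
    exact cexp_eq_neg_cexp (-1) (by push_cast; ring)
  have theta_integral : ∫ x in (0 : ℝ)..1, jacobiTheta₂ (x + 1 / 2 - τ / 2) τ = 1 := by
    simpa only [add_sub_assoc] using integral_jacobiTheta₂ hτ (1 / 2 - τ / 2)
  have diff_eq_zero := eq_zero_of_quasiPeriodic (τ := τ)
    (f := fun z ↦ g z - c * jacobiTheta₂ (z + 1 / 2 - τ / 2) τ) (by fun_prop)
    (fun z ↦ by
      dsimp only
      rw [hp, show z + 1 + 1 / 2 - τ / 2 = z + 1 / 2 - τ / 2 + 1 by ring, jacobiTheta₂_add_left])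
    (fun z ↦ by
      rw [hg, theta_quasiPeriodic]
      ring)
    (by
      rw [intervalIntegral.integral_sub, intervalIntegral.integral_const_mul, theta_integral,
        mul_one, sub_self]
      · exact (hd.continuous.comp Complex.continuous_ofReal).intervalIntegrable _ _
      · exact ((theta_differentiable.continuous.comp Complex.continuous_ofReal).const_mul
          c).intervalIntegrable _ _)
  exact sub_eq_zero.mp (congrFun diff_eq_zero z)

/-- The half product `∏ₙ (1 - exp(2πi(nτ + z)))` over `n ≥ 1`; the factors of
the triple product of theta are this at `z` and at `-z`. -/
def qProduct (z τ : ℂ) : ℂ := ∏' n : ℕ, (1 - cexp (2 * π * Complex.I * ((n + 1) * τ + z)))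

lemma norm_cexp_two_pi_I_mul_lt_one {z : ℂ} (hz : 0 < z.im) : ‖cexp (2 * π * Complex.I * z)‖ < 1 :=
  UpperHalfPlane.norm_exp_two_pi_I_lt_one ⟨z, hz⟩

lemma norm_qProduct_term (z τ : ℂ) (n : ℕ) : ‖cexp (2 * π * Complex.I * ((n + 1) * τ + z))‖ =
    ‖cexp (2 * π * Complex.I * τ)‖ ^ (n + 1) * ‖cexp (2 * π * Complex.I * z)‖ := by
  rw [← norm_pow, ← norm_mul, ← Complex.exp_nat_mul, ← Complex.exp_add]
  congr 2
  push_cast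
  ring

section

variable {τ : ℂ} (hτ : 0 < τ.im)
include hτ

lemma summable_norm_pow_succ_mul (R : ℝ) :
    Summable fun n : ℕ ↦ ‖cexp (2 * π * Complex.I * τ)‖ ^ (n + 1) * R :=
  ((summable_nat_add_iff 1).mpr (summable_geometric_of_lt_one (norm_nonneg _)
    (norm_cexp_two_pi_I_mul_lt_one hτ))).mul_right R

lemma summable_norm_qProduct_term (z : ℂ) :
    Summable fun n : ℕ ↦ ‖-cexp (2 * π * Complex.I * ((n + 1) * τ + z))‖ := by
  simpa only [norm_neg, norm_qProduct_term] using summable_norm_pow_succ_mul hτ _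

lemma multipliable_qProduct (z : ℂ) :
    Multipliable fun n : ℕ ↦ 1 - cexp (2 * π * Complex.I * ((n + 1) * τ + z)) := by
  simpa only [sub_eq_add_neg] using
    multipliable_one_add_of_summable (summable_norm_qProduct_term hτ z)

lemma differentiable_qProduct : Differentiable ℂ fun z ↦ qProduct z τ := by
  intro z
  let R := ‖cexp (2 * π * Complex.I * z)‖ + 1
  let U : Set ℂ := {w | ‖cexp (2 * π * Complex.I * w)‖ < R}
  have U_isOpen : IsOpen U := isOpen_lt (by fun_prop) continuous_const
  have bound (n : ℕ) (w : ℂ) (hw : w ∈ U) :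
      ‖-cexp (2 * π * Complex.I * ((n + 1) * τ + w))‖ ≤
        ‖cexp (2 * π * Complex.I * τ)‖ ^ (n + 1) * R := by
    rw [norm_neg, norm_qProduct_term]
    exact mul_le_mul_of_nonneg_left hw.le (by positivity)
  have converges := Summable.hasProdLocallyUniformlyOn_nat_one_add U_isOpen
    (summable_norm_pow_succ_mul hτ R) (.of_forall bound) (fun n ↦ by fun_prop)
  have differentiableOn := converges.differentiableOn
    (.of_forall fun s ↦ by dsimp only; fun_prop) U_isOpen
  simp only [← sub_eq_add_neg] at differentiableOn
  exact differentiableOn.differentiableAt (U_isOpen.mem_nhds (by simp [U, R]))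

lemma qProduct_eq_mul_qProduct_add (z : ℂ) :
    qProduct z τ = (1 - cexp (2 * π * Complex.I * (z + τ))) * qProduct (z + τ) τ := by
  have term_shift (n : ℕ) : 1 - cexp (2 * π * Complex.I * ((n + 1) * τ + (z + τ))) =
      1 - cexp (2 * π * Complex.I * (((n + 1 : ℕ) + 1) * τ + z)) := by
    congr 3
    push_cast
    ring
  have split_first := tprod_eq_zero_mul'
    (f := fun n : ℕ ↦ 1 - cexp (2 * π * Complex.I * ((n + 1) * τ + z)))
    ((multipliable_qProduct hτ (z + τ)).congr term_shift)
  rw [qProduct, split_first, qProduct, tprod_congr term_shift, Nat.cast_zero, zero_add, one_mul,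
    add_comm τ z]

lemma qProduct_ne_zero {z : ℂ} (hz : -τ.im < z.im) : qProduct z τ ≠ 0 := by
  simp only [qProduct, sub_eq_add_neg]
  refine tprod_one_add_ne_zero_of_summable (fun n h ↦ ?_) (summable_norm_qProduct_term hτ z)
  have im_pos : 0 < ((n + 1) * τ + z).im := by
    have : (0 : ℝ) ≤ n * τ.im := by positivity
    simp only [Complex.add_im, Complex.mul_im, Complex.add_re, Complex.natCast_re, Complex.one_re,
      Complex.natCast_im, Complex.one_im, add_zero, zero_mul]
    linarith
  have := norm_cexp_two_pi_I_mul_lt_one im_pos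
  rw [← add_neg_eq_zero.mp h, norm_one] at this
  exact this.false

end

lemma qProduct_add_one (z τ : ℂ) : qProduct (z + 1) τ = qProduct z τ :=
  tprod_congr fun n ↦ congrArg (1 - ·) (cexp_eq_cexp 1 (by push_cast; ring))

/-- The triple product of theta without its constant factor `∏ₙ (1 - exp(2πinτ))`. -/
def thetaProduct (z τ : ℂ) : ℂ :=
  (1 - cexp (2 * π * Complex.I * z)) * qProduct z τ * qProduct (-z) τ

lemma thetaProduct_add_one (z τ : ℂ) : thetaProduct (z + 1) τ = thetaProduct z τ := by
  rw [thetaProduct, thetaProduct, cexp_eq_cexp (b := 2 * π * Complex.I * z) 1 (by push_cast; ring),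
    qProduct_add_one, ← qProduct_add_one (-(z + 1)), neg_add, neg_add_cancel_right]

section

variable {τ : ℂ} (hτ : 0 < τ.im)
include hτ

lemma thetaProduct_add_tau (z : ℂ) :
    thetaProduct (z + τ) τ = -cexp (-2 * π * Complex.I * z) * thetaProduct z τ := by
  have cancel : cexp (-2 * π * Complex.I * z) * cexp (2 * π * Complex.I * z) = 1 := by
    rw [← Complex.exp_add, ← Complex.exp_zero]
    ring_nf
  rw [thetaProduct, thetaProduct, qProduct_eq_mul_qProduct_add hτ z,
    qProduct_eq_mul_qProduct_add hτ (-(z + τ)), show -(z + τ) + τ = -z by ring,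
    show 2 * π * Complex.I * -z = -2 * π * Complex.I * z by ring]
  linear_combination (-(1 - cexp (2 * π * Complex.I * (z + τ))) * qProduct (z + τ) τ *
    qProduct (-z) τ) * cancel

lemma thetaProduct_ne_zero {z : ℂ} (hz : 0 < z.im) (hzτ : z.im < τ.im) :
    thetaProduct z τ ≠ 0 := by
  refine mul_ne_zero (mul_ne_zero (fun h ↦ ?_) (qProduct_ne_zero hτ (by linarith)))
    (qProduct_ne_zero hτ (by simpa using hzτ))
  have := norm_cexp_two_pi_I_mul_lt_one hz
  rw [← sub_eq_zero.mp h, norm_one] at this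
  exact this.false

lemma exists_thetaProduct_eq_mul_oddTheta : ∃ C : ℂ, C ≠ 0 ∧
    ∀ z, thetaProduct z τ = C * (cexp (π * Complex.I * z) * oddTheta z τ) := by
  have differentiable : Differentiable ℂ fun z ↦ thetaProduct z τ := by
    have factor := differentiable_qProduct hτ
    exact (Differentiable.mul (by fun_prop) factor).mul (factor.comp differentiable_neg)
  have product_eq := eq_integral_mul_jacobiTheta₂ hτ differentiable
    (fun z ↦ thetaProduct_add_one z τ) (thetaProduct_add_tau hτ)
  set c := ∫ x in (0 : ℝ)..1, thetaProduct x τ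
  refine ⟨c * cexp (-(π * Complex.I * τ / 4)), mul_ne_zero (fun hc ↦ ?_) (Complex.exp_ne_zero _),
    fun z ↦ ?_⟩
  · have half_im : (τ / 2).im = τ.im / 2 := by simp
    refine thetaProduct_ne_zero hτ (z := τ / 2) (by linarith) (by linarith) ?_
    rw [product_eq, hc, zero_mul]
  · have cancel : cexp (-(π * Complex.I * τ / 4)) * (cexp (π * Complex.I * z) *
        cexp (-π * Complex.I * z + π * Complex.I * τ / 4)) = 1 := by
      rw [← Complex.exp_add, ← Complex.exp_add, ← Complex.exp_zero]
      ring_nf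
    rw [product_eq, oddTheta]
    linear_combination (-c * jacobiTheta₂ (z + 1 / 2 - τ / 2) τ) * cancel

lemma oddTheta_ne_zero {z : ℂ} (hz : 0 < z.im) (hzτ : z.im < τ.im) : oddTheta z τ ≠ 0 := by
  obtain ⟨C, -, hC⟩ := exists_thetaProduct_eq_mul_oddTheta hτ
  have := thetaProduct_ne_zero hτ hz hzτ
  rw [hC] at this
  exact right_ne_zero_of_mul (right_ne_zero_of_mul this)

end

/-! ### Klein forms -/

/-- The Klein form with characteristic `(r, s)`, up to a factor independent of `(r, s)`. -/
def kleinForm (r s τ : ℂ) : ℂ := cexp (π * Complex.I * r * (r * τ + s)) * oddTheta (r * τ + s) τ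

lemma exists_siegel_eq_mul_kleinForm (τ : ℍ) :
    ∃ C : ℂ, C ≠ 0 ∧ ∀ r : ℚ, siegel (r, 0) τ = C * kleinForm r 0 τ := by
  have hτ : 0 < (τ : ℂ).im := τ.2
  obtain ⟨C, hC, theta_eq⟩ := exists_thetaProduct_eq_mul_oddTheta hτ
  refine ⟨-C * cexp (π * Complex.I * τ / 6), by simp [hC], fun r ↦ ?_⟩
  have siegel_eq : siegel (r, 0) τ =
      -cexp (π * Complex.I * (((r : ℂ) ^ 2 - r + 1 / 6) * τ)) * thetaProduct (r * τ) τ := by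
    simp only [siegel, thetaProduct, qProduct, Rat.cast_zero, mul_zero, zero_mul, Complex.exp_zero,
      mul_one, add_zero, sub_zero]
    rw [mul_assoc, mul_assoc (1 - _), ← Multipliable.tprod_mul (multipliable_qProduct hτ _)
      (multipliable_qProduct hτ _)]
    congr! 7 <;> ring
  have exponents : cexp (π * Complex.I * (((r : ℂ) ^ 2 - r + 1 / 6) * τ)) *
      cexp (π * Complex.I * (r * τ)) =
        cexp (π * Complex.I * τ / 6) * cexp (π * Complex.I * r * (r * τ)) := by
    rw [← Complex.exp_add, ← Complex.exp_add]
    ring_nf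
  rw [siegel_eq, theta_eq, kleinForm, add_zero]
  linear_combination (-C * oddTheta (r * τ) τ) * exponents

lemma kleinForm_ne_zero {τ : ℂ} (hτ : 0 < τ.im) {r : ℝ} (hr₀ : 0 < r) (hr₁ : r < 1) :
    kleinForm r 0 τ ≠ 0 := by
  have him : (r * τ + 0 : ℂ).im = r * τ.im := by simp
  exact mul_ne_zero (Complex.exp_ne_zero _) (oddTheta_ne_zero hτ
    (by rw [him]; positivity) (by rw [him]; nlinarith))

lemma kleinForm_neg (r s τ : ℂ) : kleinForm (-r) (-s) τ = -kleinForm r s τ := by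
  rw [kleinForm, kleinForm, show -r * τ + -s = -(r * τ + s) by ring, oddTheta_neg, mul_neg]
  ring_nf

lemma kleinForm_add_one_left (r s τ : ℂ) :
    kleinForm (r + 1) s τ = -cexp (-(π * Complex.I * s)) * kleinForm r s τ := by
  have exponents : cexp (π * Complex.I * (r + 1) * (r * τ + s + τ)) *
      cexp (-π * Complex.I * τ - 2 * π * Complex.I * (r * τ + s)) =
        cexp (-(π * Complex.I * s)) * cexp (π * Complex.I * r * (r * τ + s)) := by
    rw [← Complex.exp_add, ← Complex.exp_add]
    ring_nf
  rw [kleinForm, kleinForm, show (r + 1) * τ + s = r * τ + s + τ by ring, oddTheta_add_right]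
  linear_combination -oddTheta (r * τ + s) τ * exponents

lemma kleinForm_add_one_right (r s τ : ℂ) :
    kleinForm r (s + 1) τ = -cexp (π * Complex.I * r) * kleinForm r s τ := by
  rw [kleinForm, kleinForm, ← add_assoc, oddTheta_add_one, mul_add_one, Complex.exp_add]
  ring

lemma kleinForm_tau_add_one (r s τ : ℂ) :
    kleinForm r s (τ + 1) = cexp (π * Complex.I / 4) * kleinForm r (r + s) τ := by
  rw [kleinForm, kleinForm, show r * (τ + 1) + s = r * τ + (r + s) by ring, oddTheta_tau_add_one]
  ring

lemma exists_kleinForm_neg_one_div {τ : ℂ} (hτ : 0 < τ.im) : ∃ κ : ℂ, κ ≠ 0 ∧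
    ∀ r s, kleinForm r s (-1 / τ) = κ * kleinForm s (-r) τ := by
  have hτ0 : τ ≠ 0 := by rintro rfl; simp at hτ
  obtain ⟨κ, hκ, theta_inv⟩ := exists_oddTheta_div_neg_one_div hτ
  refine ⟨κ, hκ, fun r s ↦ ?_⟩
  have exponents : cexp (π * Complex.I * r * ((s * τ + -r) / τ)) *
      cexp (π * Complex.I * (s * τ + -r) ^ 2 / τ) = cexp (π * Complex.I * s * (s * τ + -r)) := by
    rw [← Complex.exp_add]
    congr 1
    field_simp
    ring
  rw [kleinForm, kleinForm, show r * (-1 / τ) + s = (s * τ + -r) / τ by field_simp; ring,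
    theta_inv]
  linear_combination (κ * oddTheta (s * τ + -r) τ) * exponents

/-! ### The omitted values -/

/-- The theta function with characteristic `(r, s)`. It is the Klein form without the factor
`exp(πirs)`, which cancels in the three-term identity. -/
def thetaWithChar (r s τ : ℂ) : ℂ := cexp (π * Complex.I * r ^ 2 * τ) * oddTheta (r * τ + s) τ

lemma kleinForm_zero_right (r τ : ℂ) : kleinForm r 0 τ = thetaWithChar r 0 τ := by
  rw [kleinForm, thetaWithChar]
  ring_nf

lemma thetaWithChar_neg (r s τ : ℂ) : thetaWithChar (-r) (-s) τ = -thetaWithChar r s τ := by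
  rw [thetaWithChar, thetaWithChar, show -r * τ + -s = -(r * τ + s) by ring, oddTheta_neg, neg_sq,
    mul_neg]

lemma thetaWithChar_add_one_right (r s τ : ℂ) :
    thetaWithChar r (s + 1) τ = -thetaWithChar r s τ := by
  rw [thetaWithChar, thetaWithChar, ← add_assoc, oddTheta_add_one, mul_neg]

lemma thetaWithChar_add_one_left (r s τ : ℂ) :
    thetaWithChar (r + 1) s τ = -cexp (-2 * π * Complex.I * s) * thetaWithChar r s τ := by
  have exponents : cexp (π * Complex.I * (r + 1) ^ 2 * τ) *
      cexp (-π * Complex.I * τ - 2 * π * Complex.I * (r * τ + s)) =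
        cexp (-2 * π * Complex.I * s) * cexp (π * Complex.I * r ^ 2 * τ) := by
    rw [← Complex.exp_add, ← Complex.exp_add]
    ring_nf
  rw [thetaWithChar, thetaWithChar, show (r + 1) * τ + s = r * τ + s + τ by ring,
    oddTheta_add_right]
  linear_combination -oddTheta (r * τ + s) τ * exponents

lemma thetaWithChar_neg_left_zero (r τ : ℂ) : thetaWithChar (-r) 0 τ = -thetaWithChar r 0 τ := by
  simpa only [neg_zero] using thetaWithChar_neg r 0 τ

lemma thetaWithChar_neg_half_right (r τ : ℂ) :
    thetaWithChar r (-(1 / 2)) τ = -thetaWithChar r (1 / 2) τ := by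
  rw [show (1 / 2 : ℂ) = -(1 / 2) + 1 by norm_num, thetaWithChar_add_one_right]
  norm_num

lemma thetaWithChar_neg_left_half (r τ : ℂ) :
    thetaWithChar (-r) (1 / 2) τ = thetaWithChar r (1 / 2) τ := by
  rw [← neg_neg (1 / 2 : ℂ), thetaWithChar_neg, thetaWithChar_neg_half_right, neg_neg, neg_neg]

lemma thetaWithChar_one_sub_zero (r τ : ℂ) :
    thetaWithChar (1 - r) 0 τ = thetaWithChar r 0 τ := by
  rw [sub_eq_neg_add, thetaWithChar_add_one_left, thetaWithChar_neg_left_zero]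
  simp

lemma thetaWithChar_one_sub_half (r τ : ℂ) :
    thetaWithChar (1 - r) (1 / 2) τ = thetaWithChar r (1 / 2) τ := by
  rw [sub_eq_neg_add, thetaWithChar_add_one_left, thetaWithChar_neg_left_half,
    cexp_eq_neg_cexp (b := 0) (-1) (by push_cast; ring), Complex.exp_zero, neg_neg, one_mul]

section

variable {τ : ℂ} (hτ : 0 < τ.im)
include hτ

lemma thetaWithChar_three_term (x₁ x₂ y₁ y₂ z₁ z₂ w₁ w₂ : ℂ) :
    thetaWithChar (x₁ + y₁) (x₂ + y₂) τ * thetaWithChar (x₁ - y₁) (x₂ - y₂) τ *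
        (thetaWithChar (z₁ + w₁) (z₂ + w₂) τ * thetaWithChar (z₁ - w₁) (z₂ - w₂) τ) +
      thetaWithChar (y₁ + z₁) (y₂ + z₂) τ * thetaWithChar (y₁ - z₁) (y₂ - z₂) τ *
        (thetaWithChar (x₁ + w₁) (x₂ + w₂) τ * thetaWithChar (x₁ - w₁) (x₂ - w₂) τ) +
      thetaWithChar (z₁ + x₁) (z₂ + x₂) τ * thetaWithChar (z₁ - x₁) (z₂ - x₂) τ *
        (thetaWithChar (y₁ + w₁) (y₂ + w₂) τ * thetaWithChar (y₁ - w₁) (y₂ - w₂) τ) = 0 := by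
  let q (r : ℂ) := cexp (2 * π * Complex.I * r ^ 2 * τ)
  have pair (x₁ x₂ y₁ y₂ : ℂ) :
      thetaWithChar (x₁ + y₁) (x₂ + y₂) τ * thetaWithChar (x₁ - y₁) (x₂ - y₂) τ =
        q x₁ * q y₁ * (oddTheta (x₁ * τ + x₂ + (y₁ * τ + y₂)) τ *
          oddTheta (x₁ * τ + x₂ - (y₁ * τ + y₂)) τ) := by
    rw [thetaWithChar, thetaWithChar, mul_mul_mul_comm, ← Complex.exp_add, ← Complex.exp_add]
    ring_nf
  simp only [pair]
  linear_combination q x₁ * q y₁ * q z₁ * q w₁ * oddTheta_three_term hτ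
    (x₁ * τ + x₂) (y₁ * τ + y₂) (z₁ * τ + z₂) (w₁ * τ + w₂)

lemma thetaWithChar_quartic_sixths :
    thetaWithChar (1 / 6) 0 τ ^ 4 + thetaWithChar (1 / 2) 0 τ ^ 3 * thetaWithChar (1 / 6) 0 τ =
      thetaWithChar (1 / 3) 0 τ ^ 4 := by
  have h := thetaWithChar_three_term hτ (1 / 2) 0 (1 / 3) 0 (1 / 6) 0 0 0
  have five_sixths := thetaWithChar_one_sub_zero (1 / 6) τ
  have two_thirds := thetaWithChar_one_sub_zero (1 / 3) τ
  have neg_third := thetaWithChar_neg_left_zero (1 / 3) τ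
  ring_nf at h five_sixths two_thirds neg_third ⊢
  rw [five_sixths, two_thirds, neg_third] at h
  linear_combination h

lemma thetaWithChar_half_sq_mul (r : ℂ) :
    thetaWithChar r (1 / 2) τ ^ 2 * thetaWithChar (1 / 2) 0 τ ^ 2 =
      thetaWithChar (1 / 2) (1 / 2) τ ^ 2 * thetaWithChar r 0 τ ^ 2 +
        thetaWithChar (1 / 2 - r) 0 τ ^ 2 * thetaWithChar 0 (1 / 2) τ ^ 2 := by
  have h := thetaWithChar_three_term hτ r 0 0 (1 / 2) (1 / 2) 0 0 0
  have reflect := thetaWithChar_one_sub_zero (1 / 2 - r) τ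
  rw [show (1 - (1 / 2 - r) : ℂ) = 1 / 2 + r by ring] at reflect
  simp only [add_zero, zero_add, sub_zero, zero_sub, thetaWithChar_neg_half_right,
    thetaWithChar_neg_left_half, reflect] at h
  linear_combination -h

lemma thetaWithChar_jacobi_quartic :
    thetaWithChar (1 / 2) 0 τ ^ 4 + thetaWithChar 0 (1 / 2) τ ^ 4 =
      thetaWithChar (1 / 2) (1 / 2) τ ^ 4 := by
  have h := thetaWithChar_three_term hτ 0 (1 / 2) (1 / 2) (1 / 2) (1 / 2) 0 0 0
  have one_half := thetaWithChar_one_sub_half 0 τ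
  have half_one := thetaWithChar_add_one_right (1 / 2) 0 τ
  simp only [add_zero, zero_add, sub_zero, zero_sub, sub_self, add_halves,
    thetaWithChar_neg_half_right, thetaWithChar_neg_left_zero] at h one_half half_one
  rw [one_half, half_one] at h
  linear_combination h

lemma thetaWithChar_duplication (r : ℂ) :
    thetaWithChar (2 * r) 0 τ * thetaWithChar 0 (1 / 2) τ *
        (thetaWithChar (1 / 2) (1 / 2) τ * thetaWithChar (1 / 2) 0 τ) =
      2 * (thetaWithChar r 0 τ * thetaWithChar r (1 / 2) τ *
        (thetaWithChar (1 / 2 - r) 0 τ * thetaWithChar (1 / 2 - r) (1 / 2) τ)) := by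
  have h := thetaWithChar_three_term hτ r (1 / 4) r (-(1 / 4)) (1 / 2) (1 / 4) 0 (1 / 4)
  have reflect_zero := thetaWithChar_one_sub_zero (1 / 2 - r) τ
  have reflect_half := thetaWithChar_one_sub_half (1 / 2 - r) τ
  have neg_pair := thetaWithChar_neg (1 / 2 - r) (1 / 2) τ
  have neg_half := thetaWithChar_neg_half_right r τ
  ring_nf at h reflect_zero reflect_half neg_pair neg_half ⊢
  rw [reflect_zero, reflect_half, neg_pair, neg_half] at h
  linear_combination h

lemma thetaWithChar_zero_right_ne_zero {r : ℝ} (hr₀ : 0 < r) (hr₁ : r < 1) :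
    thetaWithChar r 0 τ ≠ 0 := by
  rw [← kleinForm_zero_right]
  exact kleinForm_ne_zero hτ hr₀ hr₁

lemma thetaWithChar_duplication_sixth :
    thetaWithChar (1 / 2) 0 τ * thetaWithChar 0 (1 / 2) τ * thetaWithChar (1 / 2) (1 / 2) τ =
      2 * (thetaWithChar (1 / 6) 0 τ * thetaWithChar (1 / 6) (1 / 2) τ *
        thetaWithChar (1 / 3) (1 / 2) τ) := by
  have third_ne_zero : thetaWithChar (1 / 3) 0 τ ≠ 0 := by
    simpa using thetaWithChar_zero_right_ne_zero hτ (r := 1 / 3) (by norm_num) (by norm_num)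
  have h := thetaWithChar_duplication hτ (1 / 6)
  rw [show (2 * (1 / 6) : ℂ) = 1 / 3 by norm_num,
    show (1 / 2 - 1 / 6 : ℂ) = 1 / 3 by norm_num] at h
  exact mul_left_cancel₀ third_ne_zero (by linear_combination h)

lemma thetaWithChar_half_pow_six_mul :
    thetaWithChar (1 / 2) 0 τ ^ 6 *
        (thetaWithChar 0 (1 / 2) τ ^ 2 * thetaWithChar (1 / 2) (1 / 2) τ ^ 2) =
      4 * thetaWithChar (1 / 6) 0 τ ^ 2 *
        ((thetaWithChar (1 / 6) 0 τ ^ 4 + thetaWithChar (1 / 3) 0 τ ^ 4) *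
            (thetaWithChar 0 (1 / 2) τ ^ 2 * thetaWithChar (1 / 2) (1 / 2) τ ^ 2) +
          thetaWithChar (1 / 6) 0 τ ^ 2 * thetaWithChar (1 / 3) 0 τ ^ 2 *
            (thetaWithChar 0 (1 / 2) τ ^ 4 + thetaWithChar (1 / 2) (1 / 2) τ ^ 4)) := by
  have duplication := thetaWithChar_duplication_sixth hτ
  have sixth := thetaWithChar_half_sq_mul hτ (1 / 6)
  have third := thetaWithChar_half_sq_mul hτ (1 / 3)
  rw [show (1 / 2 - 1 / 6 : ℂ) = 1 / 3 by norm_num] at sixth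
  rw [show (1 / 2 - 1 / 3 : ℂ) = 1 / 6 by norm_num] at third
  generalize thetaWithChar (1 / 2) 0 τ = k₃, thetaWithChar (1 / 6) 0 τ = k₁,
    thetaWithChar (1 / 3) 0 τ = k₂, thetaWithChar 0 (1 / 2) τ = h₀,
    thetaWithChar (1 / 2) (1 / 2) τ = h₃, thetaWithChar (1 / 6) (1 / 2) τ = h₁,
    thetaWithChar (1 / 3) (1 / 2) τ = h₂ at *
  calc k₃ ^ 6 * (h₀ ^ 2 * h₃ ^ 2) = k₃ ^ 4 * (k₃ * h₀ * h₃) ^ 2 := by ring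
    _ = 4 * k₁ ^ 2 * ((h₁ ^ 2 * k₃ ^ 2) * (h₂ ^ 2 * k₃ ^ 2)) := by rw [duplication]; ring
    _ = _ := by rw [sixth, third]; ring

lemma thetaWithChar_half_mul_cube_sub_eight :
    thetaWithChar (1 / 2) 0 τ *
        (thetaWithChar (1 / 2) 0 τ ^ 3 - 8 * thetaWithChar (1 / 6) 0 τ ^ 3) *
        (thetaWithChar 0 (1 / 2) τ ^ 4 * thetaWithChar (1 / 2) (1 / 2) τ ^ 4) =
      16 * (thetaWithChar (1 / 6) 0 τ ^ 8 * thetaWithChar (1 / 3) 0 τ ^ 4) := by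
  have half_ne_zero : thetaWithChar (1 / 2) 0 τ ≠ 0 := by
    simpa using thetaWithChar_zero_right_ne_zero hτ (r := 1 / 2) (by norm_num) (by norm_num)
  have quartic := thetaWithChar_quartic_sixths hτ
  have jacobi := thetaWithChar_jacobi_quartic hτ
  have pow_six_mul := thetaWithChar_half_pow_six_mul hτ
  generalize thetaWithChar (1 / 2) 0 τ = k₃, thetaWithChar (1 / 6) 0 τ = k₁,
    thetaWithChar (1 / 3) 0 τ = k₂, thetaWithChar 0 (1 / 2) τ = h₀,
    thetaWithChar (1 / 2) (1 / 2) τ = h₃ at *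
  have sum_sq : (h₀ ^ 4 + h₃ ^ 4) ^ 2 = k₃ ^ 8 + 4 * (h₀ ^ 4 * h₃ ^ 4) := by
    rw [← jacobi]
    ring
  have isolated : (k₃ ^ 6 - 4 * k₁ ^ 2 * (k₁ ^ 4 + k₂ ^ 4)) * (h₀ ^ 2 * h₃ ^ 2) =
      4 * k₁ ^ 4 * k₂ ^ 2 * (h₀ ^ 4 + h₃ ^ 4) := by
    linear_combination pow_six_mul
  have squared : ((k₃ ^ 6 - 4 * k₁ ^ 2 * (k₁ ^ 4 + k₂ ^ 4)) ^ 2 - 64 * k₁ ^ 8 * k₂ ^ 4) *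
      (h₀ ^ 4 * h₃ ^ 4) = 16 * k₁ ^ 8 * k₂ ^ 4 * k₃ ^ 8 := by
    have := congrArg (· ^ 2) isolated
    simp only [mul_pow, sum_sq] at this
    linear_combination this
  have discriminant : (k₃ ^ 6 - 4 * k₁ ^ 2 * (k₁ ^ 4 + k₂ ^ 4)) ^ 2 - 64 * k₁ ^ 8 * k₂ ^ 4 =
      k₃ ^ 9 * (k₃ ^ 3 - 8 * k₁ ^ 3) := by
    rw [← quartic]
    ring
  rw [discriminant] at squared
  exact mul_left_cancel₀ (pow_ne_zero 8 half_ne_zero) (by linear_combination squared)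

lemma thetaWithChar_half_div_sixth_pow_three_notMem :
    (thetaWithChar (1 / 2) 0 τ / thetaWithChar (1 / 6) 0 τ) ^ 3 ∉ ({0, 8, -1} : Set ℂ) := by
  have half_ne_zero : thetaWithChar (1 / 2) 0 τ ≠ 0 := by
    simpa using thetaWithChar_zero_right_ne_zero hτ (r := 1 / 2) (by norm_num) (by norm_num)
  have third_ne_zero : thetaWithChar (1 / 3) 0 τ ≠ 0 := by
    simpa using thetaWithChar_zero_right_ne_zero hτ (r := 1 / 3) (by norm_num) (by norm_num)
  have sixth_ne_zero : thetaWithChar (1 / 6) 0 τ ≠ 0 := by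
    simpa using thetaWithChar_zero_right_ne_zero hτ (r := 1 / 6) (by norm_num) (by norm_num)
  rintro (zero | eight | neg_one)
  · exact pow_ne_zero 3 (div_ne_zero half_ne_zero sixth_ne_zero) zero
  · rw [div_pow, div_eq_iff (pow_ne_zero 3 sixth_ne_zero)] at eight
    have h := thetaWithChar_half_mul_cube_sub_eight hτ
    rw [eight, sub_self, mul_zero, zero_mul] at h
    simpa only [mul_eq_zero, pow_eq_zero_iff, sixth_ne_zero, third_ne_zero, OfNat.ofNat_ne_zero,
      ne_eq, not_false_eq_true, or_self] using h.symm
  · rw [Set.mem_singleton_iff, div_pow, div_eq_iff (pow_ne_zero 3 sixth_ne_zero)] at neg_one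
    refine pow_ne_zero 4 third_ne_zero ?_
    rw [← thetaWithChar_quartic_sixths hτ]
    linear_combination thetaWithChar (1 / 6) 0 τ * neg_one

end

/-! ### The conjugates under the modular group -/

/-- The functions `K(a/2, b/2)³ / K(a/6, b/6)³` for the Klein form `K`, which the modular group
permutes by acting on the row vector `(a, b)`; the case `(1, 0)` is `g^1_6`. -/
def gUp6Conj (a b : ℤ) (τ : ℂ) : ℂ :=
  (kleinForm (a / 2) (b / 2) τ / kleinForm (a / 6) (b / 6) τ) ^ 3

lemma gUp6_eq_gUp6Conj (τ : ℍ) : gUp6 τ = gUp6Conj 1 0 τ := by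
  obtain ⟨C, hC, siegel_eq⟩ := exists_siegel_eq_mul_kleinForm τ
  rw [gUp6, siegel_eq, siegel_eq, ← div_pow, mul_div_mul_left _ _ hC, gUp6Conj]
  push_cast
  simp only [zero_div]

lemma gUp6Conj_one_zero_notMem {τ : ℂ} (hτ : 0 < τ.im) :
    gUp6Conj 1 0 τ ∉ ({0, 8, -1} : Set ℂ) := by
  simpa only [gUp6Conj, Int.cast_one, Int.cast_zero, zero_div, kleinForm_zero_right] using
    thetaWithChar_half_div_sixth_pow_three_notMem hτ

lemma gUp6Conj_neg (a b : ℤ) : gUp6Conj (-a) (-b) = gUp6Conj a b := by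
  ext τ
  simp only [gUp6Conj, Int.cast_neg, neg_div _ (a : ℂ), neg_div _ (b : ℂ), kleinForm_neg,
    neg_div_neg_eq]

lemma gUp6Conj_periodic_left (b : ℤ) : Function.Periodic (gUp6Conj · b) 6 := by
  intro a
  ext τ
  have multiplier : cexp (-(π * Complex.I * (b / 2))) ^ 9 =
      cexp (-(π * Complex.I * (b / 6))) ^ 3 := by
    simp only [← Complex.exp_nat_mul]
    exact cexp_eq_cexp (-2 * b) (by push_cast; ring)
  have half : ((a + 6 : ℤ) / 2 : ℂ) = a / 2 + 1 + 1 + 1 := by push_cast; ring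
  have sixth : ((a + 6 : ℤ) / 6 : ℂ) = a / 6 + 1 := by push_cast; ring
  simp only [gUp6Conj, half, sixth, kleinForm_add_one_left, div_pow]
  refine Eq.trans ?_ (mul_div_mul_left _ _
    (neg_ne_zero.mpr (pow_ne_zero 3 (Complex.exp_ne_zero (-(π * Complex.I * (b / 6)))))))
  congr 1
  · rw [← multiplier]
    ring
  · ring

lemma gUp6Conj_periodic_right (a : ℤ) : Function.Periodic (gUp6Conj a) 6 := by
  intro b
  ext τ
  have multiplier : cexp (π * Complex.I * (a / 2)) ^ 9 = cexp (π * Complex.I * (a / 6)) ^ 3 := by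
    simp only [← Complex.exp_nat_mul]
    exact cexp_eq_cexp (2 * a) (by push_cast; ring)
  have half : ((b + 6 : ℤ) / 2 : ℂ) = b / 2 + 1 + 1 + 1 := by push_cast; ring
  have sixth : ((b + 6 : ℤ) / 6 : ℂ) = b / 6 + 1 := by push_cast; ring
  simp only [gUp6Conj, half, sixth, kleinForm_add_one_right, div_pow]
  refine Eq.trans ?_ (mul_div_mul_left _ _
    (neg_ne_zero.mpr (pow_ne_zero 3 (Complex.exp_ne_zero (π * Complex.I * (a / 6))))))
  congr 1
  · rw [← multiplier]
    ring
  · ring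

lemma gUp6Conj_emod (a b : ℤ) : gUp6Conj (a % 6) (b % 6) = gUp6Conj a b := by
  rw [Int.emod_def, Int.emod_def, mul_comm, mul_comm 6 (b / 6)]
  exact (((gUp6Conj_periodic_right _).int_mul (b / 6)).sub_eq b).trans
    (((gUp6Conj_periodic_left b).int_mul (a / 6)).sub_eq a)

lemma gUp6Conj_add_one (a b : ℤ) (τ : ℂ) : gUp6Conj a b (τ + 1) = gUp6Conj a (a + b) τ := by
  simp only [gUp6Conj, kleinForm_tau_add_one, mul_div_mul_left _ _ (Complex.exp_ne_zero _),
    Int.cast_add, add_div]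

lemma gUp6Conj_neg_one_div (a b : ℤ) {τ : ℂ} (hτ : 0 < τ.im) :
    gUp6Conj a b (-1 / τ) = gUp6Conj b (-a) τ := by
  obtain ⟨κ, hκ, kleinForm_inv⟩ := exists_kleinForm_neg_one_div hτ
  simp only [gUp6Conj, kleinForm_inv, mul_div_mul_left _ _ hκ, Int.cast_neg,
    neg_div _ (a : ℂ)]

lemma gUp6Conj_smul (γ : SL(2, ℤ)) (a b : ℤ) (τ : ℍ) : gUp6Conj a b ↑(γ • τ) =
    gUp6Conj (a * γ 0 0 + b * γ 1 0) (a * γ 0 1 + b * γ 1 1) τ := by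
  have hγ : γ ∈ Subgroup.closure {ModularGroup.S, ModularGroup.T} := by
    rw [SpecialLinearGroup.SL2Z_generators]
    trivial
  induction hγ using Subgroup.closure_induction generalizing a b τ with
  | mem x hx =>
    rcases hx with rfl | rfl
    · rw [UpperHalfPlane.modular_S_smul, UpperHalfPlane.coe_mk, inv_neg, ← one_div, ← neg_div,
        gUp6Conj_neg_one_div a b τ.2]
      simp [ModularGroup.S]
    · rw [UpperHalfPlane.modular_T_smul, UpperHalfPlane.coe_vadd, Complex.ofReal_one, add_comm,
        gUp6Conj_add_one]
      simp [ModularGroup.T]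
  | one => simp
  | mul x y _ _ hx hy =>
    rw [mul_smul, hx, hy]
    simp only [Matrix.SpecialLinearGroup.coe_mul, Matrix.mul_apply, Fin.sum_univ_two]
    congr 1 <;> ring
  | inv x _ hx =>
    have h := hx (a * x⁻¹ 0 0 + b * x⁻¹ 1 0) (a * x⁻¹ 0 1 + b * x⁻¹ 1 1) (x⁻¹ • τ)
    have det := x.det_coe
    rw [Matrix.det_fin_two] at det
    rw [smul_inv_smul] at h
    rw [h]
    simp only [Matrix.SpecialLinearGroup.coe_inv, Matrix.adjugate_fin_two, Matrix.of_apply,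
      Matrix.cons_val', Matrix.cons_val_zero, Matrix.cons_val_one, Matrix.cons_val_fin_one]
    congr 1
    · linear_combination -a * det
    · linear_combination -b * det

lemma gUp6_smul (γ : SL(2, ℤ)) (τ : ℍ) : gUp6 (γ • τ) = gUp6Conj (γ 0 0) (γ 0 1) τ := by
  rw [gUp6_eq_gUp6Conj, gUp6Conj_smul]
  simp only [one_mul, zero_mul, add_zero]

lemma finite_range_gUp6Conj : (Set.range fun p : ℤ × ℤ ↦ gUp6Conj p.1 p.2).Finite := by
  refine ((Set.finite_Ico (0 : ℤ) 6).prod (Set.finite_Ico (0 : ℤ) 6)).image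
    (fun p ↦ gUp6Conj p.1 p.2) |>.subset ?_
  rintro _ ⟨⟨a, b⟩, rfl⟩
  exact ⟨(a % 6, b % 6), ⟨⟨Int.emod_nonneg a (by norm_num), Int.emod_lt_of_pos a (by norm_num)⟩,
    ⟨Int.emod_nonneg b (by norm_num), Int.emod_lt_of_pos b (by norm_num)⟩⟩, gUp6Conj_emod a b⟩

lemma finite_range_gUp6_comp_smul :
    (Set.range fun γ : SL(2, ℤ) ↦ fun τ : ℍ ↦ gUp6 (γ • τ)).Finite := by
  refine (finite_range_gUp6Conj.image fun f (τ : ℍ) ↦ f τ).subset ?_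
  rintro _ ⟨γ, rfl⟩
  exact ⟨_, ⟨(γ 0 0, γ 0 1), rfl⟩, funext fun τ ↦ (gUp6_smul γ τ).symm⟩

lemma differentiableAt_kleinForm (r s : ℂ) {τ : ℂ} (hτ : 0 < τ.im) :
    DifferentiableAt ℂ (kleinForm r s) τ := by
  have theta : DifferentiableAt ℂ
      (fun τ : ℂ ↦ jacobiTheta₂ (r * τ + s + 1 / 2 - τ / 2) τ) τ :=
    (hasFDerivAt_jacobiTheta₂ (r * τ + s + 1 / 2 - τ / 2) hτ).differentiableAt.comp
      (f := fun τ : ℂ ↦ (r * τ + s + 1 / 2 - τ / 2, τ)) τ (by fun_prop)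
  unfold kleinForm oddTheta
  fun_prop

lemma differentiableAt_gUp6Conj_one_zero {τ : ℂ} (hτ : 0 < τ.im) :
    DifferentiableAt ℂ (gUp6Conj 1 0) τ := by
  have sixth_ne_zero : kleinForm ((1 : ℤ) / 6) ((0 : ℤ) / 6) τ ≠ 0 := by
    simpa using kleinForm_ne_zero hτ (r := 1 / 6) (by norm_num) (by norm_num)
  exact ((differentiableAt_kleinForm _ _ hτ).div
    (differentiableAt_kleinForm _ _ hτ) sixth_ne_zero).pow 3

lemma gUp6_comp_ofComplex_eqOn :
    Set.EqOn (gUp6 ∘ UpperHalfPlane.ofComplex) (gUp6Conj 1 0) {z | 0 < z.im} := fun z hz ↦ by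
  rw [Function.comp_apply, gUp6_eq_gUp6Conj, UpperHalfPlane.ofComplex_apply_of_im_pos hz]

lemma mdifferentiable_gUp6 : MDifferentiable 𝓘(ℂ) 𝓘(ℂ) gUp6 :=
  UpperHalfPlane.mdifferentiable_iff.mpr fun _ hz ↦
    ((differentiableAt_gUp6Conj_one_zero hz).differentiableWithinAt).congr
      gUp6_comp_ofComplex_eqOn (gUp6_comp_ofComplex_eqOn hz)

/-! ### Behaviour at the cusps -/

open Filter Topology

lemma norm_cexp_pi_I_mul (c : ℝ) (τ : ℂ) :
    ‖cexp (π * Complex.I * c * τ)‖ = Real.exp (-(π * c * τ.im)) := by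
  rw [Complex.norm_exp]
  simp

lemma tendsto_cexp_pi_I_mul_atImInfty {c : ℝ} (hc : 0 < c) :
    Tendsto (fun τ : ℍ ↦ cexp (π * Complex.I * c * τ)) atImInfty (𝓝 0) := by
  rw [tendsto_zero_iff_norm_tendsto_zero]
  simp only [norm_cexp_pi_I_mul]
  exact Real.tendsto_exp_neg_atTop_nhds_zero.comp
    (tendsto_comap.const_mul_atTop (mul_pos Real.pi_pos hc))

lemma jacobiTheta₂_term_mul_add (x : ℝ) (s τ : ℂ) (n : ℤ) :
    jacobiTheta₂_term n (x * τ + s) τ =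
      cexp (2 * π * Complex.I * n * s) *
        cexp (π * Complex.I * ((n ^ 2 + 2 * n * x : ℝ) : ℂ) * τ) := by
  rw [jacobiTheta₂_term, ← Complex.exp_add]
  congr 1
  push_cast
  ring

lemma sq_add_two_mul_nonneg {x : ℝ} (hx : |x| ≤ 1 / 2) (n : ℤ) :
    0 ≤ (n : ℝ) ^ 2 + 2 * n * x := by
  have abs_le_sq : |(n : ℝ)| ≤ (n : ℝ) ^ 2 := mod_cast n.abs_eq_natAbs.trans_le n.natAbs_le_self_sq
  have : |2 * n * x| ≤ |(n : ℝ)| := by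
    rw [abs_mul, abs_mul, abs_two]
    nlinarith [abs_nonneg (n : ℝ)]
  linarith [neg_abs_le (2 * n * x)]

lemma tendsto_jacobiTheta₂_mul_add {x : ℝ} (hx : |x| ≤ 1 / 2) (s : ℂ) :
    Tendsto (fun τ : ℍ ↦ jacobiTheta₂ (x * τ + s) τ) atImInfty
      (𝓝 (∑' n : ℤ,
        if (n : ℝ) ^ 2 + 2 * n * x = 0 then cexp (2 * π * Complex.I * n * s) else 0)) := by
  refine tendsto_tsum_of_dominated_convergence
    (bound := fun n : ℤ ↦ ‖jacobiTheta₂_term n (x * Complex.I + s) Complex.I‖)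
    ((summable_jacobiTheta₂_term_iff _ _).mpr (by simp)).norm (fun n ↦ ?_) ?_
  · simp only [jacobiTheta₂_term_mul_add]
    split_ifs with h
    · simp [h]
    · simpa using (tendsto_cexp_pi_I_mul_atImInfty
        ((sq_add_two_mul_nonneg hx n).lt_of_ne' h)).const_mul (cexp (2 * π * Complex.I * n * s))
  · filter_upwards [tendsto_comap.eventually_ge_atTop 1] with τ hτ n
    have := sq_add_two_mul_nonneg hx n
    rw [jacobiTheta₂_term_mul_add, jacobiTheta₂_term_mul_add, norm_mul, norm_mul,
      norm_cexp_pi_I_mul, norm_cexp_pi_I_mul, Complex.I_im]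
    gcongr
    exact hτ

lemma tendsto_jacobiTheta₂_mul_add_one {x : ℝ} (hx : |x| < 1 / 2) (s : ℂ) :
    Tendsto (fun τ : ℍ ↦ jacobiTheta₂ (x * τ + s) τ) atImInfty (𝓝 1) := by
  have h := tendsto_jacobiTheta₂_mul_add hx.le s
  rw [tsum_eq_single 0 fun n hn ↦ if_neg ?_] at h
  · simpa using h
  · have one_le : 1 ≤ |(n : ℝ)| := mod_cast Int.one_le_abs hn
    intro h
    have factored : (n : ℝ) * (n + 2 * x) = 0 := by linear_combination h
    have := (mul_eq_zero.mp factored).resolve_left (mod_cast hn)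
    rw [eq_neg_of_add_eq_zero_left this, abs_neg, abs_mul, abs_two] at one_le
    linarith

lemma tendsto_jacobiTheta₂_neg_half_mul_add (s : ℂ) :
    Tendsto (fun τ : ℍ ↦ jacobiTheta₂ ((-1 / 2 : ℝ) * τ + s) τ) atImInfty
      (𝓝 (1 + cexp (2 * π * Complex.I * s))) := by
  have h := tendsto_jacobiTheta₂_mul_add (x := -1 / 2) (by norm_num [abs_div]) s
  rw [tsum_eq_sum (s := {0, 1}) fun n hn ↦ if_neg ?_, Finset.sum_pair zero_ne_one] at h
  · norm_num at h ⊢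
    exact h
  · intro h
    have factored : (n : ℝ) * (n - 1) = 0 := by linear_combination h
    rcases mul_eq_zero.mp factored with zero | one
    · exact hn (by simp [Int.cast_eq_zero.mp zero])
    · exact hn (by simp [Int.cast_eq_one.mp (sub_eq_zero.mp one)])

lemma cexp_mul_kleinForm (r s τ : ℂ) :
    cexp (-(π * Complex.I * (r - 1 / 2) ^ 2 * τ)) * kleinForm r s τ =
      cexp (π * Complex.I * (r - 1) * s) * jacobiTheta₂ ((r - 1 / 2) * τ + (s + 1 / 2)) τ := by
  rw [kleinForm, oddTheta, ← mul_assoc, ← mul_assoc, ← Complex.exp_add, ← Complex.exp_add]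
  ring_nf

lemma tendsto_cexp_mul_kleinForm {r : ℝ} (hr₀ : 0 < r) (hr₁ : r < 1) (s : ℂ) :
    Tendsto (fun τ : ℍ ↦ cexp (-(π * Complex.I * (r - 1 / 2) ^ 2 * τ)) * kleinForm r s τ)
      atImInfty (𝓝 (cexp (π * Complex.I * (r - 1) * s))) := by
  have theta := tendsto_jacobiTheta₂_mul_add_one (x := r - 1 / 2)
    (abs_lt.mpr ⟨by linarith, by linarith⟩) (s + 1 / 2)
  push_cast at theta
  simpa only [cexp_mul_kleinForm, mul_one] using
    theta.const_mul (cexp (π * Complex.I * (r - 1) * s))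

lemma tendsto_cexp_mul_kleinForm_zero (s : ℂ) :
    Tendsto (fun τ : ℍ ↦ cexp (-(π * Complex.I * (0 - 1 / 2) ^ 2 * τ)) * kleinForm 0 s τ)
      atImInfty (𝓝 (-2 * Complex.I * Complex.sin (π * s))) := by
  have theta := tendsto_jacobiTheta₂_neg_half_mul_add (s + 1 / 2)
  have limit_eq : cexp (π * Complex.I * (0 - 1) * s) *
      (1 + cexp (2 * π * Complex.I * (s + 1 / 2))) = -2 * Complex.I * Complex.sin (π * s) := by
    have product : cexp (π * Complex.I * (0 - 1) * s) * cexp (2 * π * Complex.I * s) =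
        cexp (π * s * Complex.I) := by
      rw [← Complex.exp_add]
      ring_nf
    rw [cexp_eq_neg_cexp (a := 2 * π * Complex.I * (s + 1 / 2))
      (b := 2 * π * Complex.I * s) 0 (by push_cast; ring),
      Complex.sin, show -(π * s) * Complex.I = π * Complex.I * (0 - 1) * s by ring]
    linear_combination -product + (cexp (π * Complex.I * (0 - 1) * s) -
      cexp (π * s * Complex.I)) * Complex.I_sq
  rw [← limit_eq]
  simp only [cexp_mul_kleinForm]
  refine Tendsto.const_mul _ (theta.congr fun τ ↦ ?_)
  norm_num

lemma tendsto_kleinForm_div_zero {r r' : ℝ} {s s' L L' : ℂ}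
    (h : Tendsto (fun τ : ℍ ↦ cexp (-(π * Complex.I * (r - 1 / 2) ^ 2 * τ)) * kleinForm r s τ)
      atImInfty (𝓝 L))
    (h' : Tendsto (fun τ : ℍ ↦ cexp (-(π * Complex.I * (r' - 1 / 2) ^ 2 * τ)) * kleinForm r' s' τ)
      atImInfty (𝓝 L')) (hL' : L' ≠ 0) (hrr' : (r' - 1 / 2) ^ 2 < (r - 1 / 2) ^ 2) :
    Tendsto (fun τ : ℍ ↦ kleinForm r s τ / kleinForm r' s' τ) atImInfty (𝓝 0) := by
  have limit := (tendsto_cexp_pi_I_mul_atImInfty (sub_pos.mpr hrr')).mul (h.div h' hL')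
  rw [zero_mul] at limit
  refine limit.congr fun τ ↦ ?_
  have exponents : cexp (π * Complex.I * ((r - 1 / 2) ^ 2 - (r' - 1 / 2) ^ 2 : ℝ) * τ) *
      cexp (-(π * Complex.I * (r - 1 / 2) ^ 2 * τ)) =
        cexp (-(π * Complex.I * (r' - 1 / 2) ^ 2 * τ)) := by
    rw [← Complex.exp_add]
    push_cast
    ring_nf
  rw [Pi.div_apply, ← mul_div_assoc, ← mul_assoc, exponents,
    mul_div_mul_left _ _ (Complex.exp_ne_zero _)]

lemma tendsto_kleinForm_div_of_left_eq {r s s' L L' : ℂ}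
    (h : Tendsto (fun τ : ℍ ↦ cexp (-(π * Complex.I * (r - 1 / 2) ^ 2 * τ)) * kleinForm r s τ)
      atImInfty (𝓝 L))
    (h' : Tendsto (fun τ : ℍ ↦ cexp (-(π * Complex.I * (r - 1 / 2) ^ 2 * τ)) * kleinForm r s' τ)
      atImInfty (𝓝 L')) (hL' : L' ≠ 0) :
    Tendsto (fun τ : ℍ ↦ kleinForm r s τ / kleinForm r s' τ) atImInfty (𝓝 (L / L')) :=
  (h.div h' hL').congr fun _ ↦ mul_div_mul_left _ _ (Complex.exp_ne_zero _)

lemma tendsto_inv_gUp6Conj_one (b : ℤ) :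
    Tendsto (fun τ : ℍ ↦ (gUp6Conj 1 b τ)⁻¹) atImInfty (𝓝 0) := by
  have h := (tendsto_kleinForm_div_zero
    (tendsto_cexp_mul_kleinForm (r := 1 / 6) (by norm_num) (by norm_num) (b / 6))
    (tendsto_cexp_mul_kleinForm (r := 1 / 2) (by norm_num) (by norm_num) (b / 2))
    (Complex.exp_ne_zero _) (by norm_num)).pow 3
  rw [zero_pow three_ne_zero] at h
  refine h.congr fun τ ↦ ?_
  rw [gUp6Conj, ← inv_pow, inv_div]
  push_cast
  rfl

lemma tendsto_gUp6Conj_two (b : ℤ) :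
    Tendsto (fun τ : ℍ ↦ gUp6Conj 2 b τ) atImInfty (𝓝 0) := by
  have h := ((tendsto_kleinForm_div_zero (r := 0)
    (by simpa using tendsto_cexp_mul_kleinForm_zero (b / 2))
    (tendsto_cexp_mul_kleinForm (r := 1 / 3) (by norm_num) (by norm_num) (b / 6))
    (Complex.exp_ne_zero _) (by norm_num)).const_mul (-cexp (-(π * Complex.I * (b / 2))))).pow 3
  rw [mul_zero, zero_pow three_ne_zero] at h
  refine h.congr fun τ ↦ ?_
  rw [gUp6Conj, ← mul_div_assoc, Complex.ofReal_zero, ← kleinForm_add_one_left]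
  norm_num

lemma tendsto_gUp6Conj_three (b : ℤ) :
    Tendsto (fun τ : ℍ ↦ gUp6Conj 3 b τ) atImInfty (𝓝 (-1)) := by
  have limit (s : ℂ) := tendsto_cexp_mul_kleinForm (r := 1 / 2) (by norm_num) (by norm_num) s
  have h := ((tendsto_kleinForm_div_of_left_eq (limit (b / 2)) (limit (b / 6))
    (Complex.exp_ne_zero _)).const_mul (-cexp (-(π * Complex.I * (b / 2))))).pow 3
  have limit_eq : (-cexp (-(π * Complex.I * (b / 2))) *
      (cexp (π * Complex.I * ((1 / 2 : ℝ) - 1) * (b / 2)) /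
        cexp (π * Complex.I * ((1 / 2 : ℝ) - 1) * (b / 6)))) ^ 3 = -1 := by
    rw [← Complex.exp_sub, neg_mul, ← Complex.exp_add, Odd.neg_pow (by decide),
      ← Complex.exp_nat_mul, cexp_eq_cexp (b := 0) (-b) (by push_cast; ring), Complex.exp_zero]
  rw [limit_eq] at h
  refine h.congr fun τ ↦ ?_
  rw [gUp6Conj, ← mul_div_assoc, ← kleinForm_add_one_left]
  norm_num

lemma tendsto_gUp6Conj_zero_one :
    Tendsto (fun τ : ℍ ↦ gUp6Conj 0 1 τ) atImInfty (𝓝 8) := by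
  have sin_half : Complex.sin (π * (1 / 2)) = 1 := by
    rw [mul_one_div, Complex.sin_pi_div_two]
  have sin_sixth : Complex.sin (π * (1 / 6)) = 1 / 2 := by
    have h := congrArg Complex.ofReal Real.sin_pi_div_six
    push_cast at h
    rwa [mul_one_div]
  have h := (tendsto_kleinForm_div_of_left_eq (tendsto_cexp_mul_kleinForm_zero (1 / 2))
    (tendsto_cexp_mul_kleinForm_zero (1 / 6)) (by norm_num [sin_sixth])).pow 3
  have limit_eq : (-2 * Complex.I * Complex.sin (π * (1 / 2)) /
      (-2 * Complex.I * Complex.sin (π * (1 / 6)))) ^ 3 = 8 := by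
    rw [mul_div_mul_left _ _ (by simp), sin_half, sin_sixth]
    norm_num
  rw [limit_eq] at h
  simpa [gUp6Conj] using h

lemma gUp6Conj_congr {a a' b b' : ℤ} (ha : a ≡ a' [ZMOD 6]) (hb : b ≡ b' [ZMOD 6]) :
    gUp6Conj a b = gUp6Conj a' b' := by
  rw [← gUp6Conj_emod, ha.eq, hb.eq, gUp6Conj_emod]

lemma gUp6Conj_zero_eq {b : ℤ} (hb : IsCoprime 6 b) : gUp6Conj 0 b = gUp6Conj 0 1 := by
  have isUnit : IsUnit (b : ZMod 6) := (ZMod.coe_int_isUnit_iff_isCoprime b 6).mpr hb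
  have eq_or_neg : ∀ x : ZMod 6, IsUnit x → x = (1 : ℤ) ∨ x = (-1 : ℤ) := by decide
  rcases eq_or_neg b isUnit with one | neg_one
  · exact gUp6Conj_congr rfl ((ZMod.intCast_eq_intCast_iff _ _ _).mp one)
  · rw [gUp6Conj_congr rfl ((ZMod.intCast_eq_intCast_iff _ _ _).mp neg_one), ← gUp6Conj_neg 0 1,
      neg_zero]

lemma exists_gUp6Conj_eq_of_isCoprime {a b : ℤ} (hab : IsCoprime a b) :
    gUp6Conj a b = gUp6Conj 0 1 ∨
      ∃ a' ∈ ({1, 2, 3} : Set ℤ), ∃ b', gUp6Conj a b = gUp6Conj a' b' := by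
  have residue : a ≡ 0 [ZMOD 6] ∨ (∃ a' ∈ ({1, 2, 3} : Set ℤ), a ≡ a' [ZMOD 6]) ∨
      ∃ a' ∈ ({1, 2, 3} : Set ℤ), -a ≡ a' [ZMOD 6] := by
    simp only [Set.mem_insert_iff, Set.mem_singleton_iff, exists_eq_or_imp, exists_eq_left,
      Int.ModEq]
    omega
  rcases residue with zero | ⟨a', ha', h⟩ | ⟨a', ha', h⟩
  · left
    rw [gUp6Conj_congr zero rfl, gUp6Conj_zero_eq]
    exact hab.of_isCoprime_of_dvd_left (Int.modEq_zero_iff_dvd.mp zero)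
  · exact .inr ⟨a', ha', b, gUp6Conj_congr h rfl⟩
  · exact .inr ⟨a', ha', -b, (gUp6Conj_neg a b).symm.trans (gUp6Conj_congr h rfl)⟩

lemma eq_of_mapClusterPt_of_tendsto {α X : Type*} [TopologicalSpace X] [T2Space X] {l : Filter α}
    {f : α → X} {x y : X} (hx : MapClusterPt x l f) (hy : Tendsto f l (𝓝 y)) : x = y :=
  haveI : (𝓝 x ⊓ 𝓝 y).NeBot := ClusterPt.mono hx hy
  eq_of_nhds_neBot this

lemma mem_of_mapClusterPt_gUp6Conj {a b : ℤ} (hab : IsCoprime a b) {c : ℂ}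
    (hc : MapClusterPt c atImInfty fun τ : ℍ ↦ gUp6Conj a b τ) : c ∈ ({0, 8, -1} : Set ℂ) := by
  rcases exists_gUp6Conj_eq_of_isCoprime hab with h | ⟨a', rfl | rfl | rfl, b', h⟩ <;> rw [h] at hc
  · exact .inr (.inl (eq_of_mapClusterPt_of_tendsto hc tendsto_gUp6Conj_zero_one))
  · left
    by_contra hc₀
    have inv_cluster := hc.continuousAt_comp (continuousAt_inv₀ hc₀)
    exact inv_ne_zero hc₀ (eq_of_mapClusterPt_of_tendsto inv_cluster (tendsto_inv_gUp6Conj_one b'))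
  · exact .inl (eq_of_mapClusterPt_of_tendsto hc (tendsto_gUp6Conj_two b'))
  · exact .inr (.inr (eq_of_mapClusterPt_of_tendsto hc (tendsto_gUp6Conj_three b')))

lemma mem_of_mapClusterPt_gUp6_smul (γ : SL(2, ℤ)) {c : ℂ}
    (hc : MapClusterPt c atImInfty fun τ : ℍ ↦ gUp6 (γ • τ)) : c ∈ ({0, 8, -1} : Set ℂ) := by
  have det := γ.det_coe
  rw [Matrix.det_fin_two] at det
  simp only [gUp6_smul] at hc
  exact mem_of_mapClusterPt_gUp6Conj ⟨γ 1 1, -γ 1 0, by linear_combination det⟩ hc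

/-! ### The range -/

lemma mem_range_or_mapClusterPt_of_mem_closure_image_fd {X : Type*} [TopologicalSpace X]
    [T2Space X] {f : ℍ → X} (hf : Continuous f) {c : X}
    (hc : c ∈ closure (f '' ModularGroup.fd)) : c ∈ Set.range f ∨ MapClusterPt c atImInfty f := by
  refine or_iff_not_imp_left.mpr fun hcf ↦
    (UpperHalfPlane.atImInfty_basis.map f).clusterPt_iff_forall_mem_closure.mpr fun M _ ↦ ?_
  have cover : f '' ModularGroup.fd ⊆
      f '' ModularGroup.truncatedFundamentalDomain M ∪ f '' (UpperHalfPlane.im ⁻¹' Set.Ici M) := by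
    rw [← Set.image_union]
    exact Set.image_mono fun τ hτ ↦ (le_total τ.im M).imp (⟨hτ, ·⟩) id
  have compact := (ModularGroup.isCompact_truncatedFundamentalDomain M).image hf
  have := closure_mono cover hc
  rw [closure_union, compact.isClosed.closure_eq] at this
  exact this.resolve_left fun h ↦ hcf (Set.image_subset_range _ _ h)

lemma mem_range_or_exists_mapClusterPt_of_mem_closure_range {X : Type*} [TopologicalSpace X]
    [T2Space X] {f : ℍ → X} (hf : Continuous f)
    (hfin : (Set.range fun γ : SL(2, ℤ) ↦ fun τ : ℍ ↦ f (γ • τ)).Finite) {c : X}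
    (hc : c ∈ closure (Set.range f)) :
    c ∈ Set.range f ∨ ∃ γ : SL(2, ℤ), MapClusterPt c atImInfty fun τ ↦ f (γ • τ) := by
  have cover : Set.range f ⊆ ⋃ g ∈ Set.range fun γ : SL(2, ℤ) ↦ fun τ : ℍ ↦ f (γ • τ),
      g '' ModularGroup.fd := by
    rintro _ ⟨τ, rfl⟩
    obtain ⟨γ, hγ⟩ := ModularGroup.exists_smul_mem_fd τ
    exact Set.mem_biUnion ⟨γ⁻¹, rfl⟩ ⟨γ • τ, hγ, congrArg f (inv_smul_smul γ τ)⟩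
  have mem := closure_mono cover hc
  rw [hfin.closure_biUnion] at mem
  obtain ⟨_, ⟨γ, rfl⟩, hγ⟩ := Set.mem_iUnion₂.mp mem
  refine (mem_range_or_mapClusterPt_of_mem_closure_image_fd
    (hf.comp (continuous_const_smul (γ : GL (Fin 2) ℝ))) hγ).imp ?_ fun h ↦ ⟨γ, h⟩
  rintro ⟨τ, rfl⟩
  exact ⟨γ • τ, rfl⟩

lemma range_gUp6_eq_image : Set.range gUp6 = gUp6Conj 1 0 '' {z | 0 < z.im} := by
  ext w
  constructor
  · rintro ⟨τ, rfl⟩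
    exact ⟨τ, τ.2, (gUp6_eq_gUp6Conj τ).symm⟩
  · rintro ⟨z, hz, rfl⟩
    exact ⟨⟨z, hz⟩, gUp6_eq_gUp6Conj _⟩

lemma isOpen_range_gUp6 : IsOpen (Set.range gUp6) := by
  have isOpen : IsOpen {z : ℂ | 0 < z.im} := isOpen_lt continuous_const Complex.continuous_im
  have analytic : AnalyticOnNhd ℂ (gUp6Conj 1 0) {z | 0 < z.im} :=
    DifferentiableOn.analyticOnNhd
      (fun _ hz ↦ (differentiableAt_gUp6Conj_one_zero hz).differentiableWithinAt) isOpen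
  rw [range_gUp6_eq_image]
  rcases analytic.is_constant_or_isOpen (convex_halfSpace_im_gt 0).isPreconnected with
    ⟨w, constant⟩ | isOpenMap
  · have value (τ : ℍ) : gUp6Conj 1 0 τ = w := constant τ τ.2
    have limit := tendsto_inv_gUp6Conj_one 0
    simp only [value, tendsto_const_nhds_iff, inv_eq_zero] at limit
    have := gUp6Conj_one_zero_notMem UpperHalfPlane.I.2
    rw [value, limit] at this
    exact absurd (.inl rfl) this
  · exact isOpenMap _ subset_rfl isOpen

lemma range_gUp6_subset : Set.range gUp6 ⊆ ({0, 8, -1} : Set ℂ)ᶜ := by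
  rintro _ ⟨τ, rfl⟩
  rw [gUp6_eq_gUp6Conj]
  exact gUp6Conj_one_zero_notMem τ.2

lemma range_gUp6 : Set.range gUp6 = ({0, 8, -1} : Set ℂ)ᶜ := by
  have connected : IsPreconnected ({0, 8, -1} : Set ℂ)ᶜ :=
    (Set.Countable.isPathConnected_compl_of_one_lt_rank
      (by rw [Complex.rank_real_complex]; norm_num)
      (Set.toFinite _).countable).isConnected.isPreconnected
  refine range_gUp6_subset.antisymm
    (connected.subset_of_closure_inter_subset isOpen_range_gUp6 ?_ ?_)
  · exact ⟨_, range_gUp6_subset ⟨UpperHalfPlane.I, rfl⟩, UpperHalfPlane.I, rfl⟩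
  · rintro c ⟨hc, hc'⟩
    refine (mem_range_or_exists_mapClusterPt_of_mem_closure_range mdifferentiable_gUp6.continuous
      finite_range_gUp6_comp_smul hc).resolve_right ?_
    rintro ⟨γ, hγ⟩
    exact hc' (mem_of_mapClusterPt_gUp6_smul γ hγ)

/-- `g^1_6` is holomorphic on `ℍ` and `g^1_6 - c` has no zeros on
`ℍ` iff `c ∈ {0, 8, -1}`; equivalently, the range of `g^1_6` is `ℂ ∖ {0, 8, -1}`. -/
theorem statement13 :
    MDifferentiable 𝓘(ℂ) 𝓘(ℂ) gUp6 ∧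
    (∀ c : ℂ, (∀ τ : ℍ, gUp6 τ - c ≠ 0) ↔ (c = 0 ∨ c = 8 ∨ c = -1)) ∧
    Set.range gUp6 = ({0, 8, -1} : Set ℂ)ᶜ := by
  refine ⟨mdifferentiable_gUp6, fun c ↦ ?_, range_gUp6⟩
  have no_zeros_iff : (∀ τ : ℍ, gUp6 τ - c ≠ 0) ↔ c ∉ Set.range gUp6 := by
    simp only [sub_ne_zero, Set.mem_range, not_exists, ne_eq]
  rw [no_zeros_iff, range_gUp6, Set.notMem_compl_iff, Set.mem_insert_iff, Set.mem_insert_iff,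
    Set.mem_singleton_iff]
end
end
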